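/- arXiv:2503.16002 — 11 statements merged into one kernel-verified Lean document; each statement's English description precedes it below -/
import Mathlib

section
/- For every delivery instance and every allocation π, there exists a non-wasteful allocation π' such that for every agent i ∈ N, π'_i and π_i contain exactly the same leaves (π'_i ∩ leaves(G) = π_i ∩ leaves(G)) and cost(π'_i) ≤ cost(π_i). -/
/-- A delivery instance: a finite tree rooted at the hub (encoded by a parent
function `par`; the edges of the tree are the pairs `{v, par v}` for `v ≠ hub`),
positive edge weights (`w v` is the weight of the edge between `v` and its
parent, for `v ≠ hub`), and `n` agents. -/
structure DeliveryInstance where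
  V : Type
  fintypeV : Fintype V
  decEqV : DecidableEq V
  hub : V
  par : V → V
  w : V → ℝ
  par_hub : par hub = hub
  reaches_hub : ∀ v : V, ∃ k : ℕ, par^[k] v = hub
  w_pos : ∀ v : V, v ≠ hub → 0 < w v
  n : ℕ
  n_pos : 0 < n

attribute [instance] DeliveryInstance.fintypeV DeliveryInstance.decEqV

namespace DeliveryInstance

variable (I : DeliveryInstance)

/-- `u` lies on the path from the hub to `v` (equivalently, `u` is a weak
ancestor of `v` in the tree rooted at the hub). -/
def Anc (u v : I.V) : Prop := ∃ k : ℕ, I.par^[k] v = u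

/-- A leaf of the tree rooted at the hub: a vertex with no children. -/
def IsLeaf (v : I.V) : Prop := ∀ u : I.V, I.par u = v → u = v

/-- The set of leaves of the topology. -/
def leaves : Set I.V := {v : I.V | I.IsLeaf v}

/-- The instance is unweighted if every edge has weight 1. -/
def Unweighted : Prop := ∀ v : I.V, v ≠ I.hub → I.w v = 1

/-- The cost of servicing a set `A` of orders: the total weight of the edges of
the tree that lie on the path from the hub to some vertex of `A` (the edge
between `u ≠ hub` and its parent lies on such a path iff `u` is a weak ancestor
of a member of `A`).  In particular `cost ∅ = 0`. -/
noncomputable def cost (A : Set I.V) : ℝ :=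
  ∑ u : I.V, Set.indicator {u : I.V | u ≠ I.hub ∧ ∃ v ∈ A, I.Anc u v} I.w u

/-- The bundle of agent `i` under allocation `π`: the set of orders serviced by `i`. -/
def bundle (π : I.V → Fin I.n) (i : Fin I.n) : Set I.V :=
  {v : I.V | v ≠ I.hub ∧ π v = i}

/-- An allocation is non-wasteful if every order `v` is serviced by an agent
that also services some leaf of the subtree rooted at `v`. -/
def NonWasteful (π : I.V → Fin I.n) : Prop :=
  ∀ v : I.V, v ≠ I.hub → ∃ l : I.V, I.IsLeaf l ∧ I.Anc v l ∧ π l = π v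

/-- Total (utilitarian) cost of an allocation. -/
noncomputable def totalCost (π : I.V → Fin I.n) : ℝ :=
  ∑ i : Fin I.n, I.cost (I.bundle π i)

/-- The maximum bundle cost of an allocation. -/
noncomputable def maxCost (π : I.V → Fin I.n) : ℝ :=
  Finset.univ.sup' ⟨⟨0, I.n_pos⟩, Finset.mem_univ _⟩ fun i : Fin I.n => I.cost (I.bundle π i)

/-- The minimax (MMS) share of the instance: the minimum over all allocations
of the maximum bundle cost. -/
noncomputable def MMSshare : ℝ :=
  Finset.univ.inf' ⟨fun _ => ⟨0, I.n_pos⟩, Finset.mem_univ _⟩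
    fun π : I.V → Fin I.n => I.maxCost π

/-- An allocation is MMS if every bundle costs at most the MMS share. -/
def IsMMS (π : I.V → Fin I.n) : Prop :=
  ∀ i : Fin I.n, I.cost (I.bundle π i) ≤ I.MMSshare

/-- Pareto optimality: no allocation makes every agent weakly better off and
some agent strictly better off. -/
def ParetoOptimal (π : I.V → Fin I.n) : Prop :=
  ¬ ∃ π' : I.V → Fin I.n,
      (∀ i : Fin I.n, I.cost (I.bundle π' i) ≤ I.cost (I.bundle π i)) ∧
      ∃ j : Fin I.n, I.cost (I.bundle π' j) < I.cost (I.bundle π j)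

/-- Utilitarian optimality: minimizes the sum of bundle costs. -/
def UtilitarianOptimal (π : I.V → Fin I.n) : Prop :=
  ∀ π' : I.V → Fin I.n, I.totalCost π ≤ I.totalCost π'

/-- Egalitarian optimality: minimizes the maximum bundle cost. -/
def EgalitarianOptimal (π : I.V → Fin I.n) : Prop :=
  ∀ π' : I.V → Fin I.n, I.maxCost π ≤ I.maxCost π'

/-- Envy-freeness. -/
def EF (π : I.V → Fin I.n) : Prop :=
  ∀ i j : Fin I.n, I.cost (I.bundle π i) ≤ I.cost (I.bundle π j)

/-- Envy-freeness up to one order. -/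
def EF1 (π : I.V → Fin I.n) : Prop :=
  ∀ i j : Fin I.n,
    I.bundle π i = ∅ ∨ ∃ v ∈ I.bundle π i, I.cost (I.bundle π i \ {v}) ≤ I.cost (I.bundle π j)

end DeliveryInstance

theorem exists_leaf_below (I : DeliveryInstance) (v : I.V) :
    ∃ l : I.V, I.IsLeaf l ∧ I.Anc v l ∧ (I.IsLeaf v → l = v) := by
  classical
  by_cases hv : I.IsLeaf v
  · exact ⟨v, hv, ⟨0, rfl⟩, fun _ => rfl⟩
  let d : I.V → ℕ := fun u => Nat.find (I.reaches_hub u)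
  obtain ⟨l, hl, hmax⟩ := Set.exists_max_image {u : I.V | I.Anc v u} d (Set.toFinite _)
    ⟨v, 0, rfl⟩
  refine ⟨l, ?_, hl, fun h => absurd h hv⟩
  intro u hu
  by_contra hne
  have hanc : I.Anc v u := by
    obtain ⟨k, hk⟩ := hl
    exact ⟨k + 1, by rw [Function.iterate_succ_apply, hu, hk]⟩
  have h1 : d u ≤ d l := hmax u hanc
  have h2 : I.par^[d u] u = I.hub := Nat.find_spec (I.reaches_hub u)
  rcases hk : d u with _ | k
  · rw [hk] at h2
    have h3 : u = I.hub := h2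
    rw [h3, I.par_hub] at hu
    exact hne (h3.trans hu)
  · rw [hk, Function.iterate_succ_apply, hu] at h2
    have h3 : d l ≤ k := Nat.find_min' (I.reaches_hub l) h2
    omega

/-- For every delivery instance and every allocation `π`, there
is a non-wasteful allocation `π'` such that every agent's bundle contains
exactly the same leaves as before, and costs at most as much as before. -/
theorem stmt0 (I : DeliveryInstance) (π : I.V → Fin I.n) :
    ∃ π' : I.V → Fin I.n, I.NonWasteful π' ∧
      ∀ i : Fin I.n,
        I.bundle π' i ∩ I.leaves = I.bundle π i ∩ I.leaves ∧
        I.cost (I.bundle π' i) ≤ I.cost (I.bundle π i) := by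
  choose l hleaf hanc hfix using exists_leaf_below I
  refine ⟨fun v => π (l v), ?_, fun i => ⟨?_, ?_⟩⟩
  · intro v _
    exact ⟨l v, hleaf v, hanc v, by simp only [hfix (l v) (hleaf v)]⟩
  · ext v
    constructor
    · rintro ⟨⟨h1, h2⟩, h3⟩
      exact ⟨⟨h1, by simpa only [hfix v h3] using h2⟩, h3⟩
    · rintro ⟨⟨h1, h2⟩, h3⟩
      exact ⟨⟨h1, by simpa only [hfix v h3] using h2⟩, h3⟩
  · unfold DeliveryInstance.cost
    refine Finset.sum_le_sum fun u _ => ?_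
    have hsub : {u : I.V | u ≠ I.hub ∧ ∃ v ∈ I.bundle (fun v => π (l v)) i, I.Anc u v} ⊆
        {u : I.V | u ≠ I.hub ∧ ∃ v ∈ I.bundle π i, I.Anc u v} := by
      rintro u ⟨hu, v, ⟨hv, hi⟩, k, hk⟩
      obtain ⟨j, hj⟩ := hanc v
      refine ⟨hu, l v, ⟨fun h => hv ?_, hi⟩, k + j, ?_⟩
      · rw [← hj, h]
        exact Function.iterate_fixed I.par_hub j
      · rw [Function.iterate_add_apply, hj, hk]
    by_cases hu : u = I.hub
    · rw [Set.indicator_of_notMem (fun h => h.1 hu), Set.indicator_of_notMem (fun h => h.1 hu)]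
    · exact Set.indicator_le_indicator_apply_of_subset hsub (I.w_pos u hu).le
end

section
/- In every delivery instance, every Pareto optimal allocation is non-wasteful. -/
namespace DeliveryInstance

theorem exists_leaf_below (I : DeliveryInstance) (v : I.V) :
    ∃ l : I.V, I.IsLeaf l ∧ I.Anc v l := by
  classical
  let d : I.V → ℕ := fun x => Nat.find (I.reaches_hub x)
  have hd : ∀ u, u ≠ I.hub → d (I.par u) < d u := by
    intro u hu
    have h1 : I.par^[d u] u = I.hub := Nat.find_spec (I.reaches_hub u)
    rcases hk : d u with _ | k
    · rw [hk] at h1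
      exact absurd h1 hu
    · rw [hk, Function.iterate_succ_apply] at h1
      exact Nat.lt_succ_of_le (Nat.find_min' (I.reaches_hub (I.par u)) h1)
  obtain ⟨l, hl, hmax⟩ := Finset.exists_max_image
    (Finset.univ.filter fun x => I.Anc v x) d ⟨v, by simpa using ⟨0, rfl⟩⟩
  simp only [Finset.mem_filter, Finset.mem_univ, true_and] at hl hmax
  refine ⟨l, ?_, hl⟩
  intro u hu
  by_contra hne
  have huh : u ≠ I.hub := by
    rintro rfl
    exact hne (I.par_hub.symm.trans hu)
  have h2 := hd u huh
  rw [hu] at h2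
  obtain ⟨k, hk⟩ := hl
  have h3 := hmax u ⟨k + 1, by rw [Function.iterate_succ_apply, hu, hk]⟩
  omega

theorem Anc.trans' {I : DeliveryInstance} {a b c : I.V} (h1 : I.Anc a b) (h2 : I.Anc b c) :
    I.Anc a c := by
  obtain ⟨k, rfl⟩ := h1
  obtain ⟨m, rfl⟩ := h2
  exact ⟨k + m, Function.iterate_add_apply _ _ _ _⟩

theorem Anc.ne_hub {I : DeliveryInstance} {a b : I.V} (h1 : I.Anc a b) (ha : a ≠ I.hub) :
    b ≠ I.hub := by
  rintro rfl
  obtain ⟨k, rfl⟩ := h1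
  exact ha (Function.iterate_fixed I.par_hub k)

theorem indicator_le_of_cover (I : DeliveryInstance) {A B : Set I.V}
    (h : ∀ x ∈ A, ∃ y ∈ B, I.Anc x y) (u : I.V) :
    Set.indicator {u : I.V | u ≠ I.hub ∧ ∃ v ∈ A, I.Anc u v} I.w u ≤
      Set.indicator {u : I.V | u ≠ I.hub ∧ ∃ v ∈ B, I.Anc u v} I.w u := by
  classical
  rw [Set.indicator_apply, Set.indicator_apply]
  split_ifs with h1 h2 h2
  · exact le_rfl
  · obtain ⟨hu, x, hx, hux⟩ := h1
    obtain ⟨y, hy, hxy⟩ := h x hx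
    exact absurd ⟨hu, y, hy, hux.trans' hxy⟩ h2
  · exact (I.w_pos u h2.1).le
  · exact le_rfl

end DeliveryInstance

/-- Every Pareto optimal allocation is non-wasteful. -/
theorem stmt1 (I : DeliveryInstance) (π : I.V → Fin I.n)
    (h : I.ParetoOptimal π) : I.NonWasteful π := by
  classical
  intro v hv
  by_contra hno
  push Not at hno
  choose leaf hleaf hanc using I.exists_leaf_below
  have hcover : ∀ i, ∀ x ∈ I.bundle
      (fun x => if I.Anc v x ∧ π x = π v then π (leaf x) else π x) i,
      ∃ y ∈ I.bundle π i, I.Anc x y := by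
    rintro i x ⟨hx, hxi⟩
    dsimp only at hxi
    split_ifs at hxi with hc
    · exact ⟨leaf x, ⟨(hanc x).ne_hub hx, hxi⟩, hanc x⟩
    · exact ⟨x, ⟨hx, hxi⟩, 0, rfl⟩
  refine h ⟨fun x => if I.Anc v x ∧ π x = π v then π (leaf x) else π x, ?_, π v, ?_⟩
  · intro i
    exact Finset.sum_le_sum fun u _ => I.indicator_le_of_cover (hcover i) u
  · refine Finset.sum_lt_sum (fun u _ => I.indicator_le_of_cover (hcover (π v)) u)
      ⟨v, Finset.mem_univ _, ?_⟩
    rw [Set.indicator_of_notMem, Set.indicator_of_mem]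
    · exact I.w_pos v hv
    · exact ⟨hv, v, ⟨hv, rfl⟩, 0, rfl⟩
    · rintro ⟨-, y, ⟨hy, hyi⟩, hvy⟩
      dsimp only at hyi
      split_ifs at hyi with hc
      · exact hno (leaf y) (hleaf y) (hvy.trans' (hanc y)) hyi
      · exact hc ⟨hvy, hyi⟩
end

section
/- There exists a delivery instance (in fact an unweighted one with three agents) together with an allocation on it that is non-wasteful but not Pareto optimal. -/
/-- Parent function: hub `0`, children `1` and `4` of the hub, children `2`, `3` of `1`. -/
def exPar : Fin 5 → Fin 5 := ![0, 0, 1, 1, 0]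

/-- The example instance. -/
def exI : DeliveryInstance where
  V := Fin 5
  fintypeV := inferInstance
  decEqV := inferInstance
  hub := 0
  par := exPar
  w := fun _ => 1
  par_hub := by decide
  reaches_hub := fun v => ⟨2, by revert v; decide⟩
  w_pos := fun _ _ => one_pos
  n := 3
  n_pos := by decide

/-- Decidable form of the ancestor relation. -/
def exAnc (u v : Fin 5) : Prop := v = u ∨ exPar v = u ∨ exPar (exPar v) = u

instance (u v : Fin 5) : Decidable (exAnc u v) := by unfold exAnc; infer_instance

theorem exAnc_iff (u v : Fin 5) : exI.Anc u v ↔ exAnc u v := by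
  constructor
  · rintro ⟨k, hk⟩
    change exPar^[k] v = u at hk
    have h2 : ∀ v, exPar (exPar v) = 0 := by decide
    have h0 : ∀ j, exPar^[j] 0 = 0 := fun j => Function.iterate_fixed (by decide) j
    match k, hk with
    | 0, hk => exact Or.inl hk
    | 1, hk => exact Or.inr (Or.inl hk)
    | j + 2, hk =>
      rw [Function.iterate_add_apply] at hk
      change exPar^[j] (exPar (exPar v)) = u at hk
      rw [h2, h0] at hk
      exact Or.inr (Or.inr ((h2 v).trans hk))
  · rintro (h | h | h)
    · exact ⟨0, h⟩
    · exact ⟨1, h⟩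
    · exact ⟨2, h⟩

theorem exCost (p : Fin 5 → Fin 3) (i : Fin 3) :
    exI.cost (exI.bundle p i) =
      ((Finset.univ.filter fun u : Fin 5 =>
        u ≠ 0 ∧ ∃ v : Fin 5, (v ≠ 0 ∧ p v = i) ∧ exAnc u v).card : ℝ) := by
  classical
  rw [Finset.card_filter, Nat.cast_sum]
  unfold DeliveryInstance.cost
  change ∑ u : Fin 5, _ = _
  refine Finset.sum_congr rfl fun u _ => ?_
  have : (u ∈ {u : exI.V | u ≠ exI.hub ∧ ∃ v ∈ exI.bundle p i, exI.Anc u v}) ↔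
      (u ≠ 0 ∧ ∃ v : Fin 5, (v ≠ 0 ∧ p v = i) ∧ exAnc u v) :=
    and_congr Iff.rfl (exists_congr fun v => and_congr Iff.rfl (exAnc_iff u v))
  by_cases h : (u ≠ 0 ∧ ∃ v : Fin 5, (v ≠ 0 ∧ p v = i) ∧ exAnc u v)
  · rw [if_pos h]
    exact (Set.indicator_of_mem (this.2 h) exI.w).trans Nat.cast_one.symm
  · rw [if_neg h]
    exact (Set.indicator_of_notMem (fun h' => h (this.1 h')) exI.w).trans Nat.cast_zero.symm

/-- There is an (unweighted, three-agent) delivery instance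
with an allocation that is non-wasteful but not Pareto optimal. -/
theorem stmt2 :
    ∃ I : DeliveryInstance, I.Unweighted ∧ I.n = 3 ∧
      ∃ π : I.V → Fin I.n, I.NonWasteful π ∧ ¬ I.ParetoOptimal π := by
  refine ⟨exI, fun _ _ => rfl, rfl, (![0, 0, 0, 1, 0] : Fin 5 → Fin 3), ?_, ?_⟩
  · have key : ∀ v : Fin 5, v ≠ 0 → ∃ l : Fin 5, (∀ u, exPar u = l → u = l) ∧ exAnc v l ∧
        (![0, 0, 0, 1, 0] : Fin 5 → Fin 3) l = (![0, 0, 0, 1, 0] : Fin 5 → Fin 3) v := by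
      decide
    intro v hv
    obtain ⟨l, h1, h2, h3⟩ := key v hv
    exact ⟨l, h1, (exAnc_iff v l).2 h2, h3⟩
  · refine not_not.2 ⟨(![0, 0, 0, 0, 1] : Fin 5 → Fin 3), fun i => ?_, (1 : Fin 3), ?_⟩
    · refine (exCost _ i).trans_le (le_of_le_of_eq (Nat.cast_le.2 ?_) (exCost _ i).symm)
      change Fin 3 at i
      revert i
      decide
    · refine (exCost _ 1).trans_lt (lt_of_lt_of_eq (Nat.cast_lt.2 ?_) (exCost _ 1).symm)
      decide
end

section
/- In every delivery instance, every utilitarian optimal allocation is non-wasteful. -/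
namespace DeliveryInstance

theorem iter_hub_aux (I : DeliveryInstance) (k : ℕ) : I.par^[k] I.hub = I.hub :=
  Function.iterate_fixed I.par_hub k

theorem anc_trans_aux (I : DeliveryInstance) {a b c : I.V} (h1 : I.Anc a b) (h2 : I.Anc b c) :
    I.Anc a c := by
  obtain ⟨k, hk⟩ := h1
  obtain ⟨m, hm⟩ := h2
  exact ⟨k + m, by rw [Function.iterate_add_apply, hm, hk]⟩

theorem anc_ne_hub_aux (I : DeliveryInstance) {a b : I.V} (h1 : I.Anc a b) (ha : a ≠ I.hub) :
    b ≠ I.hub := by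
  rintro rfl
  obtain ⟨k, hk⟩ := h1
  exact ha (by rw [← hk, I.iter_hub_aux])

/-- Distance to the hub. -/
def depthAux (I : DeliveryInstance) (v : I.V) : ℕ := Nat.find (I.reaches_hub v)

theorem depth_lt_aux (I : DeliveryInstance) {a b : I.V} (h1 : I.Anc a b) (ha : a ≠ I.hub)
    (hne : b ≠ a) : I.depthAux a < I.depthAux b := by
  obtain ⟨k, hk⟩ := h1
  have hb : I.par^[I.depthAux b] b = I.hub := Nat.find_spec (I.reaches_hub b)
  have hk0 : k ≠ 0 := by
    rintro rfl
    exact hne hk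
  have hlt : k < I.depthAux b := by
    by_contra hcon
    apply ha
    rw [← hk, show k = (k - I.depthAux b) + I.depthAux b by omega,
      Function.iterate_add_apply, hb, I.iter_hub_aux]
  have h2 : I.par^[I.depthAux b - k] a = I.hub := by
    rw [← hk, ← Function.iterate_add_apply, Nat.sub_add_cancel hlt.le, hb]
  have h3 : I.depthAux a ≤ I.depthAux b - k := Nat.find_min' (I.reaches_hub a) h2
  omega

theorem exists_leaf_aux (I : DeliveryInstance) (v : I.V) (hv : v ≠ I.hub) :
    ∃ l, I.IsLeaf l ∧ I.Anc v l := by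
  obtain ⟨l, hl, hmax⟩ := Set.exists_max_image {x | I.Anc v x} I.depthAux (Set.toFinite _)
    ⟨v, 0, rfl⟩
  refine ⟨l, fun u hu => ?_, hl⟩
  by_contra hne
  have hlu : I.Anc l u := ⟨1, hu⟩
  have h1 := I.depth_lt_aux hlu (I.anc_ne_hub_aux hl hv) hne
  have h2 := hmax u (I.anc_trans_aux hl hlu)
  omega

theorem cost_term_aux (I : DeliveryInstance) (A B : Set I.V)
    (h : ∀ u, (∃ v ∈ A, I.Anc u v) → ∃ v ∈ B, I.Anc u v) (u : I.V) :
    Set.indicator {u : I.V | u ≠ I.hub ∧ ∃ v ∈ A, I.Anc u v} I.w u ≤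
    Set.indicator {u : I.V | u ≠ I.hub ∧ ∃ v ∈ B, I.Anc u v} I.w u := by
  classical
  by_cases hA : u ∈ {u : I.V | u ≠ I.hub ∧ ∃ v ∈ A, I.Anc u v}
  · have hB : u ∈ {u : I.V | u ≠ I.hub ∧ ∃ v ∈ B, I.Anc u v} := ⟨hA.1, h u hA.2⟩
    rw [Set.indicator_of_mem hA, Set.indicator_of_mem hB]
  · rw [Set.indicator_of_notMem hA]
    exact Set.indicator_nonneg (fun x hx => (I.w_pos x hx.1).le) u

end DeliveryInstance

/-- Every utilitarian optimal allocation is non-wasteful. -/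
theorem stmt3 (I : DeliveryInstance) (π : I.V → Fin I.n)
    (h : I.UtilitarianOptimal π) : I.NonWasteful π := by
  classical
  intro v hv
  by_contra hcon
  push Not at hcon
  obtain ⟨x, ⟨hvx, hxi⟩, hmax⟩ := Set.exists_max_image {x | I.Anc v x ∧ π x = π v} I.depthAux
    (Set.toFinite _) ⟨v, ⟨0, rfl⟩, rfl⟩
  have hx : x ≠ I.hub := I.anc_ne_hub_aux hvx hv
  obtain ⟨l, hl, hxl⟩ := I.exists_leaf_aux x hx
  have hli : π l ≠ π v := hcon l hl (I.anc_trans_aux hvx hxl)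
  have hlx : l ≠ x := by
    rintro rfl
    exact hli hxi
  have hlh : l ≠ I.hub := I.anc_ne_hub_aux hxl hx
  have hmono : ∀ k u, (∃ y ∈ I.bundle (Function.update π x (π l)) k, I.Anc u y) →
      ∃ y ∈ I.bundle π k, I.Anc u y := by
    rintro k u ⟨y, ⟨hy, hyk⟩, huy⟩
    by_cases hyx : y = x
    · subst hyx
      rw [Function.update_self] at hyk
      exact ⟨l, ⟨hlh, hyk⟩, I.anc_trans_aux huy hxl⟩
    · rw [Function.update_of_ne hyx] at hyk
      exact ⟨y, ⟨hy, hyk⟩, huy⟩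
  refine absurd (h (Function.update π x (π l))) (not_le.mpr ?_)
  refine Finset.sum_lt_sum
    (fun k _ => Finset.sum_le_sum fun u _ => I.cost_term_aux _ _ (hmono k) u)
    ⟨π v, Finset.mem_univ _, ?_⟩
  refine Finset.sum_lt_sum (fun u _ => I.cost_term_aux _ _ (hmono (π v)) u)
    ⟨x, Finset.mem_univ _, ?_⟩
  rw [Set.indicator_of_notMem, Set.indicator_of_mem]
  · exact I.w_pos x hx
  · exact ⟨hx, x, ⟨hx, hxi⟩, 0, rfl⟩
  · rintro ⟨_, y, ⟨_, hyk⟩, hxy⟩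
    by_cases hyx : y = x
    · subst hyx
      rw [Function.update_self] at hyk
      exact hli hyk
    · rw [Function.update_of_ne hyx] at hyk
      have h1 := I.depth_lt_aux hxy hx hyx
      have h2 := hmax y ⟨I.anc_trans_aux hvx hxy, hyk⟩
      omega
end

section
/- There exists a delivery instance that admits an egalitarian optimal allocation which is not non-wasteful, and there exists a delivery instance that admits a non-wasteful allocation which is not egalitarian optimal. -/
/-- The path hub - 1 - 2 with two agents and unit weights. -/
def pathInst : DeliveryInstance where
  V := Fin 3
  fintypeV := inferInstance
  decEqV := inferInstance
  hub := 0
  par := ![0, 0, 1]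
  w := fun _ => 1
  par_hub := rfl
  reaches_hub := fun v => ⟨2, by revert v; decide⟩
  w_pos := fun _ _ => one_pos
  n := 2
  n_pos := two_pos

/-- The star with hub 0 and two leaves, with two agents and unit weights. -/
def starInst : DeliveryInstance where
  V := Fin 3
  fintypeV := inferInstance
  decEqV := inferInstance
  hub := 0
  par := ![0, 0, 0]
  w := fun _ => 1
  par_hub := rfl
  reaches_hub := fun v => ⟨1, by revert v; decide⟩
  w_pos := fun _ _ => one_pos
  n := 2
  n_pos := two_pos

theorem pathInst_cost (A : Set (Fin 3)) : pathInst.cost A =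
    Set.indicator {u : Fin 3 | u ≠ 0 ∧ ∃ v ∈ A, pathInst.Anc u v} (fun _ => (1 : ℝ)) 0 +
    Set.indicator {u : Fin 3 | u ≠ 0 ∧ ∃ v ∈ A, pathInst.Anc u v} (fun _ => (1 : ℝ)) 1 +
    Set.indicator {u : Fin 3 | u ≠ 0 ∧ ∃ v ∈ A, pathInst.Anc u v} (fun _ => (1 : ℝ)) 2 :=
  Fin.sum_univ_three
    (Set.indicator {u : Fin 3 | u ≠ 0 ∧ ∃ v ∈ A, pathInst.Anc u v} (fun _ => (1 : ℝ)))

theorem starInst_cost (A : Set (Fin 3)) : starInst.cost A =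
    Set.indicator {u : Fin 3 | u ≠ 0 ∧ ∃ v ∈ A, starInst.Anc u v} (fun _ => (1 : ℝ)) 0 +
    Set.indicator {u : Fin 3 | u ≠ 0 ∧ ∃ v ∈ A, starInst.Anc u v} (fun _ => (1 : ℝ)) 1 +
    Set.indicator {u : Fin 3 | u ≠ 0 ∧ ∃ v ∈ A, starInst.Anc u v} (fun _ => (1 : ℝ)) 2 :=
  Fin.sum_univ_three
    (Set.indicator {u : Fin 3 | u ≠ 0 ∧ ∃ v ∈ A, starInst.Anc u v} (fun _ => (1 : ℝ)))

theorem ind_le_one (S : Set (Fin 3)) (u : Fin 3) :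
    Set.indicator S (fun _ => (1 : ℝ)) u ≤ 1 := by
  by_cases h : u ∈ S <;> simp [h]

theorem ind_nonneg (S : Set (Fin 3)) (u : Fin 3) :
    0 ≤ Set.indicator S (fun _ => (1 : ℝ)) u := by
  by_cases h : u ∈ S <;> simp [h]

theorem pathInst_cost_le (A : Set (Fin 3)) : pathInst.cost A ≤ 2 := by
  rw [pathInst_cost, Set.indicator_of_notMem (fun h => h.1 rfl)]
  linarith [ind_le_one {u : Fin 3 | u ≠ 0 ∧ ∃ v ∈ A, pathInst.Anc u v} 1,
    ind_le_one {u : Fin 3 | u ≠ 0 ∧ ∃ v ∈ A, pathInst.Anc u v} 2]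

theorem pathInst_le_cost (A : Set (Fin 3)) (h : (2 : Fin 3) ∈ A) : 2 ≤ pathInst.cost A := by
  rw [pathInst_cost, Set.indicator_of_notMem (fun h => h.1 rfl),
    Set.indicator_of_mem (show (1 : Fin 3) ∈
      {u : Fin 3 | u ≠ 0 ∧ ∃ v ∈ A, pathInst.Anc u v} from ⟨by decide, 2, h, 1, rfl⟩),
    Set.indicator_of_mem (show (2 : Fin 3) ∈
      {u : Fin 3 | u ≠ 0 ∧ ∃ v ∈ A, pathInst.Anc u v} from ⟨by decide, 2, h, 0, rfl⟩)]
  norm_num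

theorem starInst_le_cost (A : Set (Fin 3)) (h : (1 : Fin 3) ∈ A) (h2 : (2 : Fin 3) ∈ A) :
    2 ≤ starInst.cost A := by
  rw [starInst_cost, Set.indicator_of_notMem (fun h => h.1 rfl),
    Set.indicator_of_mem (show (1 : Fin 3) ∈
      {u : Fin 3 | u ≠ 0 ∧ ∃ v ∈ A, starInst.Anc u v} from ⟨by decide, 1, h, 0, rfl⟩),
    Set.indicator_of_mem (show (2 : Fin 3) ∈
      {u : Fin 3 | u ≠ 0 ∧ ∃ v ∈ A, starInst.Anc u v} from ⟨by decide, 2, h2, 0, rfl⟩)]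
  norm_num

/-- In the star, only the hub and the vertex itself are ancestors. -/
theorem starInst_anc (u v : Fin 3) (hu : u ≠ 0) (h : starInst.Anc u v) : u = v := by
  obtain ⟨k, hk⟩ := h
  cases k with
  | zero => exact hk.symm
  | succ k =>
    have hiter := (Function.iterate_succ_apply' starInst.par k v).symm.trans hk
    have : ∀ x : Fin 3, (![0, 0, 0] : Fin 3 → Fin 3) x = 0 := by decide
    exact absurd (hiter.symm.trans (this _)) hu

theorem starInst_cost_le (A : Set (Fin 3)) (h : (1 : Fin 3) ∉ A ∨ (2 : Fin 3) ∉ A) :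
    starInst.cost A ≤ 1 := by
  rw [starInst_cost, Set.indicator_of_notMem (fun h => h.1 rfl)]
  have key : ∀ u : Fin 3, u ∉ A → u ∉ {u : Fin 3 | u ≠ 0 ∧ ∃ v ∈ A, starInst.Anc u v} := by
    rintro u hu ⟨h0, v, hv, ha⟩
    exact hu ((starInst_anc u v h0 ha) ▸ hv)
  rcases h with h | h
  · rw [Set.indicator_of_notMem (key _ h)]
    linarith [ind_le_one {u : Fin 3 | u ≠ 0 ∧ ∃ v ∈ A, starInst.Anc u v} 2]
  · rw [Set.indicator_of_notMem (key _ h)]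
    linarith [ind_le_one {u : Fin 3 | u ≠ 0 ∧ ∃ v ∈ A, starInst.Anc u v} 1]

theorem cost_le_maxCost (I : DeliveryInstance) (π : I.V → Fin I.n) (i : Fin I.n) :
    I.cost (I.bundle π i) ≤ I.maxCost π :=
  Finset.le_sup' (fun i : Fin I.n => I.cost (I.bundle π i)) (Finset.mem_univ i)

theorem maxCost_le (I : DeliveryInstance) (π : I.V → Fin I.n) (c : ℝ)
    (h : ∀ i, I.cost (I.bundle π i) ≤ c) : I.maxCost π ≤ c :=
  Finset.sup'_le _ _ fun i _ => h i

/-- There is an instance with an egalitarian optimal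
allocation that is not non-wasteful, and an instance with a non-wasteful
allocation that is not egalitarian optimal. -/
theorem stmt6 :
    (∃ (I : DeliveryInstance) (π : I.V → Fin I.n),
      I.EgalitarianOptimal π ∧ ¬ I.NonWasteful π) ∧
    (∃ (I : DeliveryInstance) (π : I.V → Fin I.n),
      I.NonWasteful π ∧ ¬ I.EgalitarianOptimal π) := by
  refine ⟨⟨pathInst, (![0, 0, 1] : Fin 3 → Fin 2), ?_, ?_⟩,
    ⟨starInst, (fun _ => 0 : Fin 3 → Fin 2), ?_, ?_⟩⟩
  · intro ρ
    refine le_trans (maxCost_le _ _ 2 fun i => pathInst_cost_le _) ?_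
    refine le_trans (pathInst_le_cost _ ?_) (cost_le_maxCost pathInst ρ (ρ (2 : Fin 3)))
    exact ⟨show (2 : Fin 3) ≠ 0 by decide, rfl⟩
  · intro h
    obtain ⟨l, hl, -, hp⟩ := h (1 : Fin 3) (show (1 : Fin 3) ≠ 0 by decide)
    have hleaf : ∀ u : Fin 3, (![0, 0, 1] : Fin 3 → Fin 3) u = l → u = l := hl
    have hpi : (![0, 0, 1] : Fin 3 → Fin 2) l = 0 := hp
    have : ∀ l : Fin 3, (∀ u : Fin 3, (![0, 0, 1] : Fin 3 → Fin 3) u = l → u = l) →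
      (![0, 0, 1] : Fin 3 → Fin 2) l ≠ 0 := by decide
    exact this l hleaf hpi
  · intro v hv
    refine ⟨v, ?_, ⟨0, rfl⟩, rfl⟩
    intro u hu
    have : ∀ x : Fin 3, (![0, 0, 0] : Fin 3 → Fin 3) x = 0 := by decide
    exact absurd (hu.symm.trans (this u)) hv
  · intro h
    have h1 := h (![0, 0, 1] : Fin 3 → Fin 2)
    have h2 : starInst.maxCost (![0, 0, 1] : Fin 3 → Fin 2) ≤ 1 := by
      refine maxCost_le _ _ 1 fun i => starInst_cost_le _ ?_
      by_contra hc
      push Not at hc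
      have e1 : (0 : Fin 2) = i := hc.1.2
      have e2 : (1 : Fin 2) = i := hc.2.2
      exact absurd (e1.trans e2.symm) (by decide)
    have h3 := cost_le_maxCost starInst (fun _ => 0 : Fin 3 → Fin 2) (0 : Fin 2)
    have h4 := starInst_le_cost (starInst.bundle (fun _ => 0 : Fin 3 → Fin 2) (0 : Fin 2))
      ⟨show (1 : Fin 3) ≠ 0 by decide, rfl⟩ ⟨show (2 : Fin 3) ≠ 0 by decide, rfl⟩
    have h5 := (h4.trans h3).trans (h1.trans h2)
    norm_num at h5
end

section
/- For all integers n ≥ 1 and m ≥ n+1, there exists an unweighted delivery instance with n agents and m orders (a path with one endpoint at the hub whose other endpoint has n leaves attached) that admits a non-wasteful allocation π with total cost Σ_{i∈N} cost(π_i) = n·(m−n+1), while the minimum total cost over all allocations of this instance equals m. -/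
/-- Parent map of the broom: vertices `0, …, m`, hub `0`, path `1, …, k`, leaves `> k`. -/
def broomPar (m k : ℕ) (hk : k ≤ m) (v : Fin (m + 1)) : Fin (m + 1) :=
  ⟨if (v : ℕ) ≤ k then (v : ℕ) - 1 else k, by
    have := v.2
    split_ifs <;> omega⟩

theorem broomPar_val (m k : ℕ) (hk : k ≤ m) (v : Fin (m + 1)) :
    (broomPar m k hk v : ℕ) = if (v : ℕ) ≤ k then (v : ℕ) - 1 else k := rfl

theorem broomPar_iter_low (m k : ℕ) (hk : k ≤ m) (v : Fin (m + 1)) (hv : (v : ℕ) ≤ k) (j : ℕ) :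
    (((broomPar m k hk)^[j] v : Fin (m + 1)) : ℕ) = (v : ℕ) - j := by
  induction j with
  | zero => simp
  | succ j ih =>
    rw [Function.iterate_succ_apply', broomPar_val, ih]
    split_ifs <;> omega

theorem broom_anc (m k : ℕ) (hk : k ≤ m) (u v : Fin (m + 1)) :
    (∃ j : ℕ, (broomPar m k hk)^[j] v = u) ↔ u = v ∨ ((u : ℕ) ≤ v ∧ (u : ℕ) ≤ k) := by
  constructor
  · rintro ⟨j, rfl⟩
    induction j with
    | zero => left; rfl
    | succ j ih =>
      right
      rw [Function.iterate_succ_apply', broomPar_val]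
      rcases ih with h | h
      · rw [h]; split_ifs <;> omega
      · split_ifs <;> omega
  · rintro (rfl | ⟨h1, h2⟩)
    · exact ⟨0, rfl⟩
    · by_cases hv : (v : ℕ) ≤ k
      · refine ⟨(v : ℕ) - u, Fin.ext ?_⟩
        rw [broomPar_iter_low m k hk v hv]; omega
      · refine ⟨(k - u) + 1, Fin.ext ?_⟩
        have hp : (broomPar m k hk v : ℕ) = k := by rw [broomPar_val, if_neg hv]
        rw [Function.iterate_succ_apply, broomPar_iter_low m k hk _ (by omega)]; omega

/-- The broom instance. -/
noncomputable def broom (n m k : ℕ) (hn : 0 < n) (hk : k ≤ m) : DeliveryInstance where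
  V := Fin (m + 1)
  fintypeV := inferInstance
  decEqV := inferInstance
  hub := 0
  par := broomPar m k hk
  w := fun _ => 1
  par_hub := by apply Fin.ext; rw [broomPar_val]; simp
  reaches_hub := fun v => (broom_anc m k hk 0 v).2 (Or.inr ⟨by simp, by simp⟩)
  w_pos := fun _ _ => one_pos
  n := n
  n_pos := hn

/-- The cost function of the broom, on plain `Fin` vertices. -/
noncomputable def broomCost (m k : ℕ) (A : Set (Fin (m + 1))) : ℝ :=
  ∑ u : Fin (m + 1), Set.indicator {u : Fin (m + 1) | u ≠ 0 ∧
    ∃ v ∈ A, u = v ∨ ((u : ℕ) ≤ v ∧ (u : ℕ) ≤ k)} (fun _ => (1 : ℝ)) u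

theorem broom_cost_eq (n m k : ℕ) (hn : 0 < n) (hk : k ≤ m) (A : Set (Fin (m + 1))) :
    (broom n m k hn hk).cost A = broomCost m k A := by
  have hset : {u : Fin (m + 1) | u ≠ 0 ∧ ∃ v ∈ A, ∃ j : ℕ, (broomPar m k hk)^[j] v = u} =
      {u : Fin (m + 1) | u ≠ 0 ∧ ∃ v ∈ A, u = v ∨ ((u : ℕ) ≤ v ∧ (u : ℕ) ≤ k)} := by
    ext u
    simp only [Set.mem_ofPred_eq, broom_anc]
  unfold broomCost
  rw [← hset]
  rfl

theorem broom_total (n m k : ℕ) (hn : 0 < n) (hk : k ≤ m) (π : Fin (m + 1) → Fin n) :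
    (broom n m k hn hk).totalCost π =
      ∑ i : Fin n, broomCost m k {v : Fin (m + 1) | v ≠ 0 ∧ π v = i} :=
  Finset.sum_congr rfl fun i _ => broom_cost_eq n m k hn hk {v : Fin (m + 1) | v ≠ 0 ∧ π v = i}

theorem broom_sum_nonzero (m : ℕ) :
    (∑ u : Fin (m + 1), if u ≠ 0 then (1 : ℝ) else 0) = m := by
  rw [Fin.sum_univ_succ]
  simp [Fin.succ_ne_zero]

theorem broom_lower (n m k : ℕ) (hn : 0 < n) (hk : k ≤ m) (π : Fin (m + 1) → Fin n) :
    (m : ℝ) ≤ (broom n m k hn hk).totalCost π := by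
  classical
  rw [broom_total]
  simp only [broomCost, Set.indicator_apply, Set.mem_ofPred_eq]
  rw [Finset.sum_comm, ← broom_sum_nonzero m]
  refine Finset.sum_le_sum fun u _ => ?_
  split_ifs with hu
  · refine le_trans ?_ (Finset.single_le_sum (fun i _ => ?_) (Finset.mem_univ (π u)))
    · rw [if_pos ⟨hu, u, ⟨hu, rfl⟩, Or.inl rfl⟩]
    · split_ifs <;> norm_num
  · exact Finset.sum_nonneg fun i _ => by split_ifs <;> norm_num

theorem broom_const (n m k : ℕ) (hn : 0 < n) (hk : k ≤ m) :
    (broom n m k hn hk).totalCost (fun _ => (⟨0, hn⟩ : Fin n)) = m := by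
  classical
  refine (broom_total n m k hn hk (fun _ => (⟨0, hn⟩ : Fin n))).trans ?_
  simp only [broomCost, Set.indicator_apply, Set.mem_ofPred_eq]
  rw [Finset.sum_eq_single (⟨0, hn⟩ : Fin n), ← broom_sum_nonzero m]
  · refine Finset.sum_congr rfl fun u _ => if_congr ?_ rfl rfl
    exact ⟨fun h => h.1, fun hu => ⟨hu, u, ⟨hu, rfl⟩, Or.inl rfl⟩⟩
  · intro b _ hb
    refine Finset.sum_eq_zero fun u _ => if_neg ?_
    rintro ⟨_, v, ⟨_, h⟩, _⟩
    exact hb h.symm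
  · intro h; exact absurd (Finset.mem_univ _) h

/-- Each leaf goes to its own agent; path vertices go to agent `0`. -/
def broomAlloc (n m k : ℕ) (hn : 0 < n) (hm : m = k + n) (v : Fin (m + 1)) : Fin n :=
  ⟨(v : ℕ) - (k + 1), by have := v.2; omega⟩

theorem broom_waste (n m k : ℕ) (hn : 0 < n) (hk : k ≤ m) (hm : m = k + n) :
    (broom n m k hn hk).totalCost (broomAlloc n m k hn hm) = (n : ℝ) * ((k : ℝ) + 1) := by
  classical
  rw [broom_total]
  have key : ∀ i : Fin n, broomCost m k
        {v : Fin (m + 1) | v ≠ 0 ∧ broomAlloc n m k hn hm v = i} = (k : ℝ) + 1 := by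
    intro i
    have hi := i.2
    simp only [broomCost, Set.indicator_apply]
    simp only [Set.mem_ofPred_eq (p := fun u : Fin (m + 1) => u ≠ 0 ∧ ∃ v ∈ {v : Fin (m + 1) | v ≠ 0 ∧ broomAlloc n m k hn hm v = i}, u = v ∨ ((u : ℕ) ≤ v ∧ (u : ℕ) ≤ k))]
    have e : ∀ u : Fin (m + 1), (u ≠ 0 ∧ ∃ v ∈ {v : Fin (m + 1) | v ≠ 0 ∧
        broomAlloc n m k hn hm v = i}, u = v ∨ ((u : ℕ) ≤ v ∧ (u : ℕ) ≤ k)) ↔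
        (u : ℕ) ∈ insert (k + 1 + (i : ℕ)) (Finset.Icc 1 k) := by
      intro u
      simp only [Set.mem_ofPred_eq, Finset.mem_insert, Finset.mem_Icc, ne_eq, Fin.ext_iff,
        broomAlloc, Fin.val_zero]
      constructor
      · rintro ⟨h0, v, ⟨h1, h2⟩, h3⟩
        omega
      · intro h
        refine ⟨by omega, ⟨k + 1 + i, by omega⟩, ⟨?_, ?_⟩, ?_⟩
        · show ¬ (k + 1 + (i : ℕ) = 0)
          omega
        · show k + 1 + (i : ℕ) - (k + 1) = i
          omega
        · show (u : ℕ) = k + 1 + (i : ℕ) ∨ (u : ℕ) ≤ k + 1 + (i : ℕ) ∧ (u : ℕ) ≤ k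
          omega
    simp_rw [e]
    rw [Fin.sum_univ_eq_sum_range
      (fun u => if u ∈ insert (k + 1 + (i : ℕ)) (Finset.Icc 1 k) then (1 : ℝ) else 0) (m + 1),
      Finset.sum_ite_mem]
    have hs : Finset.range (m + 1) ∩ insert (k + 1 + (i : ℕ)) (Finset.Icc 1 k) =
        insert (k + 1 + (i : ℕ)) (Finset.Icc 1 k) := by
      apply Finset.inter_eq_right.2
      intro x
      simp only [Finset.mem_insert, Finset.mem_Icc, Finset.mem_range]
      omega
    rw [hs, Finset.sum_const, Finset.card_insert_of_notMem]
    · simp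
    · simp only [Finset.mem_Icc]; omega
  rw [Finset.sum_congr rfl fun i _ => key i]
  simp only [Finset.sum_const, Finset.card_univ, Fintype.card_fin, nsmul_eq_mul]

theorem broom_leaf (n m k : ℕ) (hn : 0 < n) (hk : k ≤ m) (l : Fin (m + 1)) (hl : k < l) :
    (broom n m k hn hk).IsLeaf l := by
  have h : ∀ u : Fin (m + 1), broomPar m k hk u = l → u = l := by
    intro u hu
    have := congrArg Fin.val hu
    rw [broomPar_val] at this
    split_ifs at this <;> omega
  exact h

theorem broom_nonWasteful (n m k : ℕ) (hn : 0 < n) (hk : k ≤ m) (hm : m = k + n) :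
    (broom n m k hn hk).NonWasteful (broomAlloc n m k hn hm) := by
  have h : ∀ v : Fin (m + 1), v ≠ 0 → ∃ l : Fin (m + 1), (broom n m k hn hk).IsLeaf l ∧
      (∃ j : ℕ, (broomPar m k hk)^[j] l = v) ∧
        broomAlloc n m k hn hm l = broomAlloc n m k hn hm v := by
    intro v _
    by_cases hv : k < (v : ℕ)
    · exact ⟨v, broom_leaf n m k hn hk v hv, ⟨0, rfl⟩, rfl⟩
    · refine ⟨⟨k + 1, by omega⟩, broom_leaf n m k hn hk _ (Nat.lt_succ_self k), ?_, ?_⟩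
      · rw [broom_anc]
        right
        show (v : ℕ) ≤ k + 1 ∧ (v : ℕ) ≤ k
        omega
      · apply Fin.ext
        show k + 1 - (k + 1) = (v : ℕ) - (k + 1)
        omega
  exact h

/-- For all `n ≥ 1` and `m ≥ n + 1` there is an unweighted
instance with `n` agents and `m` orders — a path with one endpoint at the hub
whose other endpoint has `n` leaves attached — which admits a non-wasteful
allocation of total cost `n·(m − n + 1)`, while the minimum total cost over all
allocations equals `m`. -/
theorem stmt7 (n m : ℕ) (hn : 1 ≤ n) (hm : n + 1 ≤ m) :
    ∃ I : DeliveryInstance, I.Unweighted ∧ I.n = n ∧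
      Fintype.card {v : I.V // v ≠ I.hub} = m ∧
      (∃ (p : Fin (m - n) → I.V) (q : Fin n → I.V),
        Function.Injective p ∧ Function.Injective q ∧
        (∀ i j, p i ≠ q j) ∧ (∀ i, p i ≠ I.hub) ∧ (∀ j, q j ≠ I.hub) ∧
        (∀ v : I.V, v = I.hub ∨ (∃ i, v = p i) ∨ (∃ j, v = q j)) ∧
        I.par (p ⟨0, by omega⟩) = I.hub ∧
        (∀ (i : Fin (m - n)) (h : (i : ℕ) + 1 < m - n),
          I.par (p ⟨(i : ℕ) + 1, h⟩) = p i) ∧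
        (∀ j, I.par (q j) = p ⟨m - n - 1, by omega⟩)) ∧
      (∃ π : I.V → Fin I.n, I.NonWasteful π ∧
        I.totalCost π = (n : ℝ) * ((m : ℝ) - (n : ℝ) + 1)) ∧
      (∀ π : I.V → Fin I.n, (m : ℝ) ≤ I.totalCost π) ∧
      (∃ π : I.V → Fin I.n, I.totalCost π = (m : ℝ)) := by
  have hk : m - n ≤ m := Nat.sub_le _ _
  have hmk : m = (m - n) + n := by omega
  refine ⟨broom n m (m - n) hn hk, fun _ _ => rfl, rfl, ?_, ?_,
    ⟨broomAlloc n m (m - n) hn hmk, broom_nonWasteful n m (m - n) hn hk hmk, ?_⟩,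
    broom_lower n m (m - n) hn hk, ⟨_, broom_const n m (m - n) hn hk⟩⟩
  · have h : Fintype.card {v : Fin (m + 1) // v ≠ 0} = m := by
      rw [Fintype.card_subtype_compl]; simp
    exact (Fintype.card_congr (Equiv.refl _)).trans h
  · refine ⟨fun i => (⟨(i : ℕ) + 1, by omega⟩ : Fin (m + 1)),
      fun j => (⟨m - n + 1 + (j : ℕ), by omega⟩ : Fin (m + 1)), ?_, ?_, ?_, ?_, ?_, ?_, ?_, ?_, ?_⟩
    · intro a b h
      have := congrArg Fin.val h
      apply Fin.ext
      simpa using this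
    · intro a b h
      have := congrArg Fin.val h
      apply Fin.ext
      simpa using this
    · intro i j h
      have : (i : ℕ) + 1 = m - n + 1 + (j : ℕ) := congrArg Fin.val h
      omega
    · intro i h
      have : (i : ℕ) + 1 = 0 := congrArg Fin.val h
      omega
    · intro j h
      have : m - n + 1 + (j : ℕ) = 0 := congrArg Fin.val h
      omega
    · intro v
      change Fin (m + 1) at v
      have hv := v.2
      by_cases h0 : (v : ℕ) = 0
      · exact Or.inl (Fin.ext h0)
      · right
        by_cases h1 : (v : ℕ) ≤ m - n
        · refine Or.inl ⟨⟨(v : ℕ) - 1, by omega⟩, Fin.ext ?_⟩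
          show (v : ℕ) = (v : ℕ) - 1 + 1
          omega
        · refine Or.inr ⟨⟨(v : ℕ) - (m - n + 1), by omega⟩, Fin.ext ?_⟩
          show (v : ℕ) = m - n + 1 + ((v : ℕ) - (m - n + 1))
          omega
    · apply Fin.ext
      show (if 0 + 1 ≤ m - n then 0 + 1 - 1 else m - n) = 0
      rw [if_pos (by omega)]
    · intro i h
      apply Fin.ext
      show (if (i : ℕ) + 1 + 1 ≤ m - n then (i : ℕ) + 1 + 1 - 1 else m - n) = (i : ℕ) + 1
      rw [if_pos (by omega)]; omega
    · intro j
      apply Fin.ext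
      show (if m - n + 1 + (j : ℕ) ≤ m - n then m - n + 1 + (j : ℕ) - 1 else m - n) = m - n - 1 + 1
      rw [if_neg (by omega)]; omega
  · rw [broom_waste n m (m - n) hn hk hmk, Nat.cast_sub (by omega)]
end

section
/- Let I = (N, G, h) be a delivery instance in which the hub h is a leaf of G (a vertex of degree one), let v be the unique neighbor of h, and let J = (N, G−h, v) be the instance obtained by deleting h and making v the hub. Then MMS(I) = MMS(J) + ω({h,v}). -/
theorem DI_iter_hub (I : DeliveryInstance) (k : ℕ) : I.par^[k] I.hub = I.hub :=
  Function.iterate_fixed I.par_hub k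

theorem DI_anc_iff (I J : DeliveryInstance)
    (e : J.V ≃ {x : I.V // x ≠ I.hub})
    (hpar : ∀ x : J.V,
      (e (J.par x)).1 = if I.par (e x).1 = I.hub then (e x).1 else I.par (e x).1) (x y : J.V) :
    J.Anc x y ↔ I.Anc (e x).1 (e y).1 := by
  constructor
  · rintro ⟨k, hk⟩
    induction k generalizing y with
    | zero => exact ⟨0, by simpa using congrArg (fun z => (e z).1) hk⟩
    | succ k ih =>
      rw [Function.iterate_succ_apply] at hk
      obtain ⟨l, hl⟩ := ih _ hk
      rw [hpar] at hl
      split_ifs at hl with h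
      · exact ⟨l, hl⟩
      · exact ⟨l + 1, by rw [Function.iterate_succ_apply]; exact hl⟩
  · rintro ⟨k, hk⟩
    induction k generalizing y with
    | zero => exact ⟨0, (e.injective (Subtype.ext hk))⟩
    | succ k ih =>
      rw [Function.iterate_succ_apply] at hk
      by_cases h : I.par (e y).1 = I.hub
      · rw [h, DI_iter_hub] at hk
        exact absurd hk.symm (e x).2
      · have h2 := hpar y
        rw [if_neg h] at h2
        rw [← h2] at hk
        obtain ⟨l, hl⟩ := ih _ hk
        exact ⟨l + 1, by rw [Function.iterate_succ_apply]; exact hl⟩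

open Classical in
theorem DI_cost (I J : DeliveryInstance) (v : I.V)
    (hchild : I.par v = I.hub)
    (e : J.V ≃ {x : I.V // x ≠ I.hub})
    (hhub : (e J.hub).1 = v)
    (hw : ∀ x : J.V, x ≠ J.hub → J.w x = I.w (e x).1)
    (hpar : ∀ x : J.V,
      (e (J.par x)).1 = if I.par (e x).1 = I.hub then (e x).1 else I.par (e x).1)
    (A : Set I.V) (B : Set J.V) (hA : ∀ a ∈ A, a ≠ I.hub)
    (hB : ∀ b, b ∈ B ↔ b ≠ J.hub ∧ (e b).1 ∈ A) :
    I.cost A = J.cost B + if A.Nonempty then I.w v else 0 := by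
  have hanc := DI_anc_iff I J e hpar
  unfold DeliveryInstance.cost
  have h1 : ∀ f : I.V → ℝ, f I.hub = 0 → ∑ u, f u = ∑ x : J.V, f (e x).1 := by
    intro f hf
    rw [Equiv.sum_comp e (fun z => f z.1), ← Finset.sum_erase Finset.univ hf]
    exact Finset.sum_subtype (p := fun x => x ≠ I.hub) _ (by simp) f
  rw [h1 _ (by simp), ← Finset.add_sum_erase _ _ (Finset.mem_univ J.hub),
    ← Finset.add_sum_erase Finset.univ
      (fun u => Set.indicator {u : J.V | u ≠ J.hub ∧ ∃ v ∈ B, J.Anc u v} J.w u)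
      (Finset.mem_univ J.hub)]
  have h2 : Set.indicator {u : J.V | u ≠ J.hub ∧ ∃ v ∈ B, J.Anc u v} J.w J.hub = 0 := by simp
  have h3 : Set.indicator {u : I.V | u ≠ I.hub ∧ ∃ v ∈ A, I.Anc u v} I.w (e J.hub).1
      = if A.Nonempty then I.w v else 0 := by
    rw [Set.indicator_apply, hhub]
    congr 1
    apply propext
    constructor
    · rintro ⟨_, a, ha, _⟩
      exact ⟨a, ha⟩
    · rintro ⟨a, ha⟩
      refine ⟨hhub ▸ (e J.hub).2, a, ha, ?_⟩
      obtain ⟨y, hy⟩ := e.surjective ⟨a, hA a ha⟩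
      have := (hanc J.hub y).1 (J.reaches_hub y)
      rwa [hy, hhub] at this
  have h4 : ∀ x ∈ Finset.univ.erase J.hub,
      Set.indicator {u : I.V | u ≠ I.hub ∧ ∃ v ∈ A, I.Anc u v} I.w (e x).1 =
      Set.indicator {u : J.V | u ≠ J.hub ∧ ∃ v ∈ B, J.Anc u v} J.w x := by
    intro x hx
    have hx : x ≠ J.hub := by simpa using hx
    rw [Set.indicator_apply, Set.indicator_apply, hw x hx]
    congr 1
    apply propext
    constructor
    · rintro ⟨_, a, ha, hxa⟩
      obtain ⟨y, hy⟩ := e.surjective ⟨a, hA a ha⟩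
      have hya : (e y).1 = a := by rw [hy]
      rw [← hya] at hxa ha
      refine ⟨hx, y, (hB y).2 ⟨?_, ha⟩, (hanc x y).2 hxa⟩
      rintro rfl
      obtain ⟨k, hk⟩ := hxa
      cases k with
      | zero => exact hx (e.injective (Subtype.ext hk)).symm
      | succ k =>
        rw [Function.iterate_succ_apply, hhub, hchild, DI_iter_hub] at hk
        exact (e x).2 hk.symm
    · rintro ⟨_, y, hy, hxy⟩
      exact ⟨(e x).2, _, ((hB y).1 hy).2, (hanc x y).1 hxy⟩
  rw [h2, h3, Finset.sum_congr rfl h4]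
  ring

theorem DI_cost_nonneg (I : DeliveryInstance) (A : Set I.V) : 0 ≤ I.cost A := by
  apply Finset.sum_nonneg
  intro u _
  apply Set.indicator_apply_nonneg
  intro h
  exact (I.w_pos u h.1).le

theorem DI_cost_empty (I : DeliveryInstance) : I.cost ∅ = 0 := by
  simp [DeliveryInstance.cost]

/-- If the hub of instance `I` is a leaf (degree-one vertex)
of the tree with unique neighbor `v`, and `J` is the instance obtained from `I`
by deleting the hub and making `v` the hub, then
`MMS(I) = MMS(J) + ω({hub, v})`. -/
theorem stmt10 (I J : DeliveryInstance) (v : I.V) (hv : v ≠ I.hub)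
    (hchild : I.par v = I.hub)
    (hdeg : ∀ u : I.V, I.par u = I.hub → u = I.hub ∨ u = v)
    (hn : J.n = I.n)
    (e : J.V ≃ {x : I.V // x ≠ I.hub})
    (hhub : (e J.hub).1 = v)
    (hw : ∀ x : J.V, x ≠ J.hub → J.w x = I.w (e x).1)
    (hpar : ∀ x : J.V,
      (e (J.par x)).1 = if I.par (e x).1 = I.hub then (e x).1 else I.par (e x).1) :
    I.MMSshare = J.MMSshare + I.w v := by
  have hvpos := I.w_pos v hv
  apply le_antisymm
  · obtain ⟨π, -, hπ⟩ := Finset.exists_mem_eq_inf' (s := Finset.univ)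
      ⟨fun _ => ⟨0, J.n_pos⟩, Finset.mem_univ _⟩ (fun π : J.V → Fin J.n => J.maxCost π)
    change J.MMSshare = J.maxCost π at hπ
    rw [hπ]
    let ρ : I.V → Fin I.n := fun x =>
      if hx : x ≠ I.hub then Fin.cast hn (π (e.symm ⟨x, hx⟩)) else ⟨0, I.n_pos⟩
    refine (Finset.inf'_le _ (Finset.mem_univ ρ)).trans ?_
    apply Finset.sup'_le
    intro i _
    have hc := DI_cost I J v hchild e hhub hw hpar (I.bundle ρ i)
      (J.bundle π (Fin.cast hn.symm i)) (fun a ha => ha.1) (by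
        intro b
        have h := (e b).2
        simp only [DeliveryInstance.bundle, Set.mem_ofPred_eq, ρ, h, Subtype.coe_eta,
          Equiv.symm_apply_apply, Fin.ext_iff, ne_eq, not_false_eq_true, true_and, dite_true, Fin.val_cast])
    have hm : J.cost (J.bundle π (Fin.cast hn.symm i)) ≤ J.maxCost π :=
      Finset.le_sup' (fun i => J.cost (J.bundle π i)) (Finset.mem_univ _)
    rw [hc]
    split_ifs <;> linarith
  · apply Finset.le_inf'
    intro ρ _
    let π : J.V → Fin J.n := fun x => Fin.cast hn.symm (ρ (e x).1)
    have hJ : J.MMSshare ≤ J.maxCost π := Finset.inf'_le _ (Finset.mem_univ π)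
    have hc : ∀ i : Fin I.n, _ := fun i => DI_cost I J v hchild e hhub hw hpar (I.bundle ρ i)
      (J.bundle π (Fin.cast hn.symm i)) (fun a ha => ha.1) (by
        intro b
        have h := (e b).2
        simp only [DeliveryInstance.bundle, Set.mem_ofPred_eq, π, h,
          Fin.ext_iff, Fin.val_cast, ne_eq, not_false_eq_true, true_and])
    have hm : ∀ i, I.cost (I.bundle ρ i) ≤ I.maxCost ρ := fun i =>
      Finset.le_sup' (fun i => I.cost (I.bundle ρ i)) (Finset.mem_univ i)
    suffices h : J.maxCost π ≤ I.maxCost ρ - I.w v by linarith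
    apply Finset.sup'_le
    intro j _
    have hci := hc (Fin.cast hn j)
    have hmi := hm (Fin.cast hn j)
    have hj : Fin.cast hn.symm (Fin.cast hn j) = j := rfl
    rw [hj] at hci
    by_cases hne : (I.bundle ρ (Fin.cast hn j)).Nonempty
    · rw [if_pos hne] at hci
      linarith
    · have hcv := hc (ρ v)
      have hmv := hm (ρ v)
      rw [if_pos ⟨v, hv, rfl⟩] at hcv
      have h0 := DI_cost_nonneg J (J.bundle π (Fin.cast hn.symm (ρ v)))
      rw [if_neg hne, Set.not_nonempty_iff_eq_empty.1 hne, DI_cost_empty] at hci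
      linarith
end

section
/- Let I be an unweighted delivery instance, and partition the leaves of G (rooted at the hub h) into types T_1,…,T_k, where two leaves have the same type if and only if they have the same parent. Call an allocation π' nice if for every pair of distinct agents i, j ∈ N there is at most one type t ∈ [k] with π'_i ∩ T_t ≠ ∅ and π'_j ∩ T_t ≠ ∅. Then for every allocation π there exists a nice allocation π' with cost(π'_i) ≤ cost(π_i) for every agent i ∈ N. -/
/-- An allocation is *nice* if for every pair of distinct agents there is at
most one leaf type (leaves have the same type iff they have the same parent)
from which both agents service a leaf. -/
def DeliveryInstance.Nice (I : DeliveryInstance) (π : I.V → Fin I.n) : Prop :=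
  ∀ i j : Fin I.n, i ≠ j → ∀ p q : I.V,
    (∃ l ∈ I.bundle π i, I.IsLeaf l ∧ I.par l = p) →
    (∃ l ∈ I.bundle π j, I.IsLeaf l ∧ I.par l = p) →
    (∃ l ∈ I.bundle π i, I.IsLeaf l ∧ I.par l = q) →
    (∃ l ∈ I.bundle π j, I.IsLeaf l ∧ I.par l = q) →
    p = q

namespace DeliveryInstance

theorem eq_of_anc_leaf (I : DeliveryInstance) {l v : I.V} (hl : I.IsLeaf l)
    (h : I.Anc l v) : v = l := by
  obtain ⟨k, hk⟩ := h
  induction k generalizing v with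
  | zero => simpa using hk
  | succ k ih =>
    rw [Function.iterate_succ_apply] at hk
    exact hl v (ih hk)

theorem anc_sibling (I : DeliveryInstance) {u l m : I.V} (hu : u ≠ l)
    (hp : I.par l = I.par m) (h : I.Anc u l) : I.Anc u m := by
  obtain ⟨k, hk⟩ := h
  cases k with
  | zero => exact absurd hk.symm hu
  | succ k =>
    refine ⟨k + 1, ?_⟩
    rw [Function.iterate_succ_apply] at hk ⊢
    rw [← hp]; exact hk

/-- Swapping two leaves does not increase costs, if each of the two owners already
owns a sibling of the leaf received. -/
theorem cost_swap_le (I : DeliveryInstance) (hU : I.Unweighted) (π : I.V → Fin I.n)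
    {l l' m m' : I.V} (hl : I.IsLeaf l) (hl' : I.IsLeaf l')
    (hlh : l ≠ I.hub) (hlh' : l' ≠ I.hub) (hmh : m ≠ I.hub) (hmh' : m' ≠ I.hub)
    (hm : I.par l = I.par m) (hm' : I.par l' = I.par m')
    (hπ : π m = π l') (hπ' : π m' = π l) (k : Fin I.n) :
    I.cost (I.bundle (fun v => π (Equiv.swap l l' v)) k) ≤ I.cost (I.bundle π k) := by
  unfold cost
  rw [← Equiv.sum_comp (Equiv.swap l l')
    (fun u => Set.indicator {u : I.V | u ≠ I.hub ∧ ∃ v ∈ I.bundle π k, I.Anc u v} I.w u)]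
  refine Finset.sum_le_sum fun u _ => ?_
  by_cases hu : u ≠ I.hub ∧ ∃ v ∈ I.bundle (fun v => π (Equiv.swap l l' v)) k, I.Anc u v
  · have key : Equiv.swap l l' u ≠ I.hub ∧
        ∃ v ∈ I.bundle π k, I.Anc (Equiv.swap l l' u) v := by
      obtain ⟨huh, v, ⟨hvh, hvk⟩, huv⟩ := hu
      simp only at hvk
      by_cases h1 : u = l
      · subst h1
        have := I.eq_of_anc_leaf hl huv
        subst this
        rw [Equiv.swap_apply_left] at hvk ⊢
        exact ⟨hlh', l', ⟨hlh', hvk⟩, 0, rfl⟩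
      by_cases h2 : u = l'
      · subst h2
        have := I.eq_of_anc_leaf hl' huv
        subst this
        rw [Equiv.swap_apply_right] at hvk ⊢
        exact ⟨hlh, l, ⟨hlh, hvk⟩, 0, rfl⟩
      rw [Equiv.swap_apply_of_ne_of_ne h1 h2]
      refine ⟨huh, ?_⟩
      by_cases h3 : v = l
      · subst h3
        rw [Equiv.swap_apply_left] at hvk
        exact ⟨m, ⟨hmh, hπ.trans hvk⟩, I.anc_sibling h1 hm huv⟩
      by_cases h4 : v = l'
      · subst h4
        rw [Equiv.swap_apply_right] at hvk
        exact ⟨m', ⟨hmh', hπ'.trans hvk⟩, I.anc_sibling h2 hm' huv⟩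
      rw [Equiv.swap_apply_of_ne_of_ne h3 h4] at hvk
      exact ⟨v, ⟨hvh, hvk⟩, huv⟩
    refine le_of_eq ((Set.indicator_of_mem ?_ _).trans (Eq.trans ?_
      (Set.indicator_of_mem ?_ _).symm))
    · exact hu
    · rw [hU _ hu.1, hU _ key.1]
    · exact key
  · refine (Set.indicator_of_notMem ?_ _).le.trans ?_
    · exact hu
    exact Set.indicator_nonneg (fun x hx => (I.w_pos x hx.1).le) _

theorem potential_swap_lt {V : Type} [Fintype V] [DecidableEq V] (a b : V → ℤ) {l l' : V}
    (ha : a l' < a l) (hb : b l < b l') :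
    ∑ v, a v * b v < ∑ v, a v * b (Equiv.swap l l' v) := by
  have hne : l ≠ l' := by rintro rfl; exact lt_irrefl _ ha
  rw [← sub_pos, ← Finset.sum_sub_distrib]
  have : ∑ v, (a v * b (Equiv.swap l l' v) - a v * b v) =
      ∑ v ∈ ({l, l'} : Finset V), (a v * b (Equiv.swap l l' v) - a v * b v) := by
    symm
    refine Finset.sum_subset (Finset.subset_univ _) fun x _ hx => ?_
    simp only [Finset.mem_insert, Finset.mem_singleton, not_or] at hx
    rw [Equiv.swap_apply_of_ne_of_ne hx.1 hx.2, sub_self]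
  rw [this, Finset.sum_pair hne, Equiv.swap_apply_left, Equiv.swap_apply_right]
  nlinarith [mul_pos (sub_pos.2 ha) (sub_pos.2 hb)]

end DeliveryInstance

/-- In an unweighted instance, every allocation can be turned
into a nice allocation without increasing any agent's cost. -/
theorem stmt11 (I : DeliveryInstance) (hU : I.Unweighted) (π : I.V → Fin I.n) :
    ∃ π' : I.V → Fin I.n, I.Nice π' ∧
      ∀ i : Fin I.n, I.cost (I.bundle π' i) ≤ I.cost (I.bundle π i) := by
  classical
  let f : I.V → ℤ := fun v => ((Fintype.equivFin I.V v : ℕ) : ℤ)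
  have hf : Function.Injective f := by
    intro x y h
    exact (Fintype.equivFin I.V).injective (Fin.ext (Int.ofNat_inj.1 h))
  let Φ : (I.V → Fin I.n) → ℤ := fun ρ => ∑ v, f (I.par v) * ((ρ v : ℕ) : ℤ)
  let S : Finset (I.V → Fin I.n) := Finset.univ.filter fun ρ =>
    ∀ i : Fin I.n, I.cost (I.bundle ρ i) ≤ I.cost (I.bundle π i)
  have hS : S.Nonempty := ⟨π, by simp [S]⟩
  obtain ⟨ρ, hρS, hmax⟩ := Finset.exists_max_image S Φ hS
  have hρ : ∀ i : Fin I.n, I.cost (I.bundle ρ i) ≤ I.cost (I.bundle π i) := by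
    simpa [S] using hρS
  refine ⟨ρ, ?_, hρ⟩
  -- no improving swap: `i < j` and `f p < f q` is impossible
  have key : ∀ i j : Fin I.n, i < j → ∀ p q : I.V, f p < f q →
      (∃ l ∈ I.bundle ρ i, I.IsLeaf l ∧ I.par l = p) →
      (∃ l ∈ I.bundle ρ j, I.IsLeaf l ∧ I.par l = p) →
      (∃ l ∈ I.bundle ρ i, I.IsLeaf l ∧ I.par l = q) →
      (∃ l ∈ I.bundle ρ j, I.IsLeaf l ∧ I.par l = q) → False := by
    rintro i j hij p q hpq ⟨m', ⟨hm'h, hm'i⟩, -, hm'p⟩ ⟨l', ⟨hl'h, hl'j⟩, hl', hl'p⟩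
      ⟨l, ⟨hlh, hli⟩, hl, hlq⟩ ⟨m, ⟨hmh, hmj⟩, -, hmq⟩
    have hmem : (fun v => ρ (Equiv.swap l l' v)) ∈ S := by
      simp only [S, Finset.mem_filter, Finset.mem_univ, true_and]
      intro k
      exact (I.cost_swap_le hU ρ hl hl' hlh hl'h hmh hm'h (hlq.trans hmq.symm)
        (hl'p.trans hm'p.symm) (hmj.trans hl'j.symm) (hm'i.trans hli.symm) k).trans (hρ k)
    have h1 := hmax _ hmem
    have h2 := DeliveryInstance.potential_swap_lt (fun v => f (I.par v))
      (fun v => ((ρ v : ℕ) : ℤ)) (l := l) (l' := l')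
      (by simp only [hlq, hl'p]; exact hpq)
      (by simp only [hli, hl'j]; exact_mod_cast hij)
    exact absurd h1 (not_le.2 h2)
  intro i j hij p q h1 h2 h3 h4
  by_contra hpq
  have hfpq : f p ≠ f q := fun h => hpq (hf h)
  rcases lt_or_gt_of_ne hij with h | h <;> rcases lt_or_gt_of_ne hfpq with h' | h'
  · exact key i j h p q h' h1 h2 h3 h4
  · exact key i j h q p h' h3 h4 h1 h2
  · exact key j i h p q h' h2 h1 h4 h3
  · exact key j i h q p h' h4 h3 h2 h1
end

section
/- Let k, B ∈ ℕ and let a_1,…,a_{3k} be positive integers with Σ_{i=1}^{3k} a_i = k·B and B/4 < a_i < B/2 for every i. Let I be the delivery instance with k agents whose topology is a star with center the hub h and with one order v_i joined to h by an edge of weight a_i for each i ∈ [3k]. Then MMS(I) ≤ B if and only if there exists a partition of {1,…,3k} into k sets S_1,…,S_k, each of size exactly 3, such that Σ_{i∈S_j} a_i = B for every j ∈ [k]. -/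
/-- In a star, the cost of a bundle is the sum of the weights of its orders. -/
lemma star_cost (m : ℕ) (a : Fin m → ℕ)
    (I : DeliveryInstance)
    (e : {v : I.V // v ≠ I.hub} ≃ Fin m)
    (hstar : ∀ v : I.V, v ≠ I.hub → I.par v = I.hub)
    (hw : ∀ v : {v : I.V // v ≠ I.hub}, I.w v.1 = (a (e v) : ℝ))
    (π : I.V → Fin I.n) (i : Fin I.n) :
    I.cost (I.bundle π i) =
      ((∑ j ∈ Finset.univ.filter (fun j => π (e.symm j).1 = i), a j : ℕ) : ℝ) := by
  classical
  have hhub : ∀ t : ℕ, I.par^[t] I.hub = I.hub := fun t =>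
    Function.iterate_fixed I.par_hub t
  have hset : {u : I.V | u ≠ I.hub ∧ ∃ v ∈ I.bundle π i, I.Anc u v} =
      {u : I.V | u ≠ I.hub ∧ π u = i} := by
    ext u
    simp only [Set.mem_ofPred_eq, DeliveryInstance.bundle, DeliveryInstance.Anc]
    constructor
    · rintro ⟨hu, v, ⟨hv, hvi⟩, t, ht⟩
      refine ⟨hu, ?_⟩
      cases t with
      | zero => simp at ht; rw [← ht]; exact hvi
      | succ t =>
        rw [Function.iterate_succ_apply, hstar v hv, hhub] at ht
        exact absurd ht.symm hu
    · rintro ⟨hu, hi⟩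
      exact ⟨hu, u, ⟨hu, hi⟩, 0, rfl⟩
  unfold DeliveryInstance.cost
  rw [hset]
  have h1 : ∑ u : I.V, Set.indicator {u : I.V | u ≠ I.hub ∧ π u = i} I.w u =
      ∑ u ∈ Finset.univ.filter (fun u : I.V => u ≠ I.hub),
        (if π u = i then I.w u else 0) := by
    rw [Finset.sum_filter]
    apply Finset.sum_congr rfl
    intro u _
    simp only [Set.indicator, Set.mem_ofPred_eq]
    by_cases h1 : u = I.hub <;> by_cases h2 : π u = i <;> simp [h1, h2]
  rw [h1, Finset.sum_filter, ← Finset.sum_filter,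
    Finset.sum_subtype (p := fun u : I.V => u ≠ I.hub) _ (by simp)]
  push_cast
  rw [Finset.sum_filter, ← Equiv.sum_comp e]
  apply Finset.sum_congr rfl
  intro v _
  simp [hw v]

/-- Let `a₁, …, a_{3k}` be positive integers summing to `k·B`
with `B/4 < aᵢ < B/2`, and let `I` be the `k`-agent instance whose topology is
a star centered at the hub with one order per `i ∈ [3k]` attached by an edge of
weight `aᵢ`.  Then `MMS(I) ≤ B` iff `[3k]` can be partitioned into `k` triples
each summing to `B`. -/
theorem stmt13 (k B : ℕ) (a : Fin (3 * k) → ℕ)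
    (hpos : ∀ i, 0 < a i) (hsum : ∑ i, a i = k * B)
    (hlow : ∀ i, B < 4 * a i) (hhigh : ∀ i, 2 * a i < B)
    (I : DeliveryInstance) (hk : I.n = k)
    (e : {v : I.V // v ≠ I.hub} ≃ Fin (3 * k))
    (hstar : ∀ v : I.V, v ≠ I.hub → I.par v = I.hub)
    (hw : ∀ v : {v : I.V // v ≠ I.hub}, I.w v.1 = (a (e v) : ℝ)) :
    I.MMSshare ≤ (B : ℝ) ↔
      ∃ S : Fin k → Finset (Fin (3 * k)),
        (∀ i : Fin (3 * k), ∃! j : Fin k, i ∈ S j) ∧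
        (∀ j, (S j).card = 3) ∧
        (∀ j, ∑ i ∈ S j, a i = B) := by
  subst hk
  have key := star_cost _ a I e hstar hw
  have hiff : I.MMSshare ≤ (B : ℝ) ↔ ∃ π : I.V → Fin I.n, ∀ i,
      ∑ j ∈ Finset.univ.filter (fun j => π (e.symm j).1 = i), a j ≤ B := by
    have h1 : I.MMSshare ≤ (B : ℝ) ↔ ∃ π ∈ (Finset.univ : Finset (I.V → Fin I.n)),
        I.maxCost π ≤ (B : ℝ) := Finset.inf'_le_iff _
    rw [h1]
    apply exists_congr
    intro π
    have h2 : I.maxCost π ≤ (B : ℝ) ↔ ∀ i ∈ (Finset.univ : Finset (Fin I.n)),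
        I.cost (I.bundle π i) ≤ (B : ℝ) := Finset.sup'_le_iff _ _
    rw [h2]
    constructor
    · rintro ⟨-, h⟩ i
      have := h i (Finset.mem_univ _)
      rw [key] at this
      exact_mod_cast this
    · intro h
      refine ⟨Finset.mem_univ _, fun i _ => ?_⟩
      rw [key]
      exact_mod_cast h i
  rw [hiff]
  constructor
  · rintro ⟨π, hπ⟩
    have htot : ∑ i, ∑ j ∈ Finset.univ.filter (fun j => π (e.symm j).1 = i), a j
        = ∑ _i : Fin I.n, B := by
      rw [Finset.sum_fiberwise, hsum]
      simp
    have hB := (Finset.sum_eq_sum_iff_of_le (fun i _ => hπ i)).1 htot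
    refine ⟨fun i => Finset.univ.filter (fun j => π (e.symm j).1 = i), ?_, ?_, ?_⟩
    · intro i
      refine ⟨π (e.symm i).1, by simp, ?_⟩
      intro y hy
      exact (Finset.mem_filter.1 hy).2.symm
    · intro i
      have hi := hB i (Finset.mem_univ _)
      dsimp only
      generalize Finset.univ.filter (fun j => π (e.symm j).1 = i) = T at hi
      have h0 : 0 < B := by
        have := hhigh ⟨0, by have := I.n_pos; omega⟩
        omega
      have h1 : T.card • (B + 1) ≤ ∑ j ∈ T, 4 * a j :=
        Finset.card_nsmul_le_sum _ _ _ (fun j _ => hlow j)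
      have h2 : ∑ j ∈ T, (2 * a j + 1) ≤ T.card • B :=
        Finset.sum_le_card_nsmul _ _ _ (fun j _ => hhigh j)
      rw [← Finset.mul_sum, hi, smul_eq_mul] at h1
      rw [Finset.sum_add_distrib, ← Finset.mul_sum, hi, smul_eq_mul] at h2
      simp only [Finset.sum_const, smul_eq_mul, mul_one] at h2
      have h3 : T.card < 4 := by
        by_contra h
        push Not at h
        nlinarith
      interval_cases T.card <;> omega
    · intro i
      exact hB i (Finset.mem_univ _)
  · rintro ⟨S, hS, -, hSB⟩
    choose f hf hf' using hS
    refine ⟨fun v => if h : v ≠ I.hub then f (e ⟨v, h⟩) else ⟨0, I.n_pos⟩, ?_⟩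
    intro i
    rw [← hSB i]
    apply Finset.sum_le_sum_of_subset
    intro j hj
    have h := (e.symm j).2
    simp only [Finset.mem_filter, Finset.mem_univ, true_and, dif_pos h] at hj
    simp at hj
    rw [← hj]
    exact hf j
end

section
/- Let k, B ∈ ℕ and let a_1,…,a_ℓ be positive integers with Σ_{i=1}^{ℓ} a_i = k·B. Let I be the unweighted delivery instance with k agents whose topology is obtained from a hub vertex h by attaching, for each i ∈ [ℓ], a vertex-disjoint path P_i on a_i vertices whose first vertex is adjacent to h. Then MMS(I) ≤ B if and only if there exists an assignment α : [ℓ] → [k] such that Σ_{i : α(i)=j} a_i = B for every j ∈ [k]. -/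
/-- Let `a₁, …, a_ℓ` be positive integers summing to `k·B`,
and let `I` be the unweighted `k`-agent instance whose topology consists of the
hub together with `ℓ` vertex-disjoint paths, the `i`-th having `aᵢ` vertices
and its first vertex adjacent to the hub.  Then `MMS(I) ≤ B` iff the items can
be assigned to `k` bins each of which receives total size exactly `B`. -/
theorem stmt15 (k B ℓ : ℕ) (a : Fin ℓ → ℕ)
    (hpos : ∀ i, 0 < a i) (hsum : ∑ i, a i = k * B)
    (I : DeliveryInstance) (hU : I.Unweighted) (hk : I.n = k)
    (e : {v : I.V // v ≠ I.hub} ≃ (Σ i : Fin ℓ, Fin (a i)))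
    (hpar0 : ∀ (i : Fin ℓ) (j : Fin (a i)), (j : ℕ) = 0 →
      I.par (e.symm ⟨i, j⟩).1 = I.hub)
    (hpar1 : ∀ (i : Fin ℓ) (j : Fin (a i)), 0 < (j : ℕ) →
      I.par (e.symm ⟨i, j⟩).1
        = (e.symm ⟨i, ⟨(j : ℕ) - 1, lt_of_le_of_lt (Nat.sub_le _ _) j.isLt⟩⟩).1) :
    I.MMSshare ≤ (B : ℝ) ↔
      ∃ α : Fin ℓ → Fin k,
        ∀ j : Fin k, ∑ i ∈ Finset.univ.filter (fun i => α i = j), a i = B := by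
  subst hk
  classical
  -- iterates along a path
  have hdown : ∀ (i : Fin ℓ) (d : ℕ) (j j' : Fin (a i)), (j : ℕ) + d = j' →
      I.par^[d] (e.symm ⟨i, j'⟩).1 = (e.symm ⟨i, j⟩).1 := by
    intro i d
    induction d with
    | zero =>
      intro j j' h
      have : j = j' := Fin.ext (by simpa using h)
      subst this; rfl
    | succ d ih =>
      intro j j' h
      rw [Function.iterate_succ_apply, hpar1 i j' (by omega)]
      exact ih j _ (by simp only; omega)
  have hhub : ∀ d, I.par^[d] I.hub = I.hub := fun d => Function.iterate_fixed I.par_hub d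
  -- ancestors stay on the same path
  have hsame : ∀ (d : ℕ) (i : Fin ℓ) (j' : Fin (a i)),
      I.par^[d] (e.symm ⟨i, j'⟩).1 = I.hub ∨
      ∃ j : Fin (a i), I.par^[d] (e.symm ⟨i, j'⟩).1 = (e.symm ⟨i, j⟩).1 := by
    intro d i
    induction d with
    | zero => intro j'; exact Or.inr ⟨j', rfl⟩
    | succ d ih =>
      intro j'
      rw [Function.iterate_succ_apply]
      rcases Nat.eq_zero_or_pos (j' : ℕ) with h | h
      · rw [hpar0 i j' h, hhub]; exact Or.inl rfl
      · rw [hpar1 i j' h]; exact ih _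
  have hcost : ∀ A : Set I.V, I.cost A =
      ∑ i : Fin ℓ, ∑ j : Fin (a i),
        if ∃ v ∈ A, I.Anc (e.symm ⟨i, j⟩).1 v then (1 : ℝ) else 0 := by
    intro A
    have h1 : I.cost A = ∑ u : {v : I.V // v ≠ I.hub},
        if ∃ v ∈ A, I.Anc u.1 v then (1 : ℝ) else 0 := by
      unfold DeliveryInstance.cost
      rw [← Finset.sum_subtype (Finset.univ.filter (fun v => v ≠ I.hub)) (by simp)
        (fun u => if ∃ v ∈ A, I.Anc u v then (1 : ℝ) else 0), Finset.sum_filter]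
      refine Finset.sum_congr rfl fun u _ => ?_
      by_cases hu : u = I.hub
      · simp [hu]
      · simp [Set.indicator_apply, hu, hU u hu]
    rw [h1, ← Fintype.sum_sigma', ← e.symm.sum_comp]
  have hM : I.MMSshare ≤ (B : ℝ) ↔ ∃ π : I.V → Fin I.n, ∀ i, I.cost (I.bundle π i) ≤ B := by
    unfold DeliveryInstance.MMSshare DeliveryInstance.maxCost
    constructor
    · intro h
      obtain ⟨π, -, hπ⟩ := (Finset.inf'_le_iff _).1 h
      exact ⟨π, fun i => (Finset.sup'_le_iff _ _).1 hπ i (Finset.mem_univ i)⟩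
    · rintro ⟨π, hπ⟩
      exact (Finset.inf'_le_iff _).2
        ⟨π, Finset.mem_univ π, (Finset.sup'_le_iff _ _).2 fun i _ => hπ i⟩
  rw [hM]
  constructor
  · rintro ⟨π, hπ⟩
    let leaf : Fin ℓ → I.V := fun i => (e.symm ⟨i, ⟨a i - 1, Nat.sub_lt (hpos i) one_pos⟩⟩).1
    refine ⟨fun i => π (leaf i), ?_⟩
    have hle : ∀ j : Fin I.n,
        ∑ i ∈ Finset.univ.filter (fun i => π (leaf i) = j), a i ≤ B := by
      intro j
      have h := hπ j
      rw [hcost] at h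
      have h2 : ((∑ i ∈ Finset.univ.filter (fun i => π (leaf i) = j), a i : ℕ) : ℝ) ≤ B := by
        refine le_trans ?_ h
        rw [Nat.cast_sum, Finset.sum_filter]
        refine Finset.sum_le_sum fun i _ => ?_
        split_ifs with hi
        · refine le_of_eq ?_
          rw [Finset.sum_congr rfl (g := fun _ => (1:ℝ))]
          · simp
          · intro j' _
            rw [if_pos]
            refine ⟨leaf i, ⟨(e.symm _).2, hi⟩, a i - 1 - j', hdown _ _ _ _ ?_⟩
            have := j'.isLt
            simp only; omega
        · exact Finset.sum_nonneg fun _ _ => by split_ifs <;> norm_num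
      exact_mod_cast h2
    have htot : ∑ j : Fin I.n, ∑ i ∈ Finset.univ.filter (fun i => π (leaf i) = j), a i
        = ∑ _j : Fin I.n, B := by
      rw [Finset.sum_fiberwise, hsum]; simp
    intro j
    exact (Finset.sum_eq_sum_iff_of_le fun j _ => hle j).1 htot j (Finset.mem_univ j)
  · rintro ⟨α, hα⟩
    refine ⟨fun v => if h : v ≠ I.hub then α (e ⟨v, h⟩).1 else ⟨0, I.n_pos⟩, fun j => ?_⟩
    rw [hcost, ← hα j, Nat.cast_sum, Finset.sum_filter]
    refine Finset.sum_le_sum fun i _ => ?_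
    by_cases hi : α i = j
    · rw [if_pos hi]
      calc _ ≤ ∑ _j : Fin (a i), (1:ℝ) :=
            Finset.sum_le_sum fun _ _ => by split_ifs <;> norm_num
        _ = _ := by simp
    · rw [if_neg hi]
      refine le_of_eq (Finset.sum_eq_zero fun j' _ => if_neg ?_)
      rintro ⟨v, ⟨hv, hvj⟩, d, hd⟩
      simp only [dif_pos hv] at hvj
      obtain ⟨⟨i', j''⟩, he⟩ : ∃ x, e ⟨v, hv⟩ = x := ⟨_, rfl⟩
      have hv' : v = (e.symm ⟨i', j''⟩).1 := by rw [← he]; simp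
      rw [he] at hvj
      rw [hv'] at hd
      rcases hsame d i' j'' with h | ⟨j3, h⟩
      · exact (e.symm ⟨i, j'⟩).2 (hd.symm.trans h)
      · have h4 := e.symm.injective (Subtype.ext (hd.symm.trans h))
        have h5 : i = i' := congrArg Sigma.fst h4
        exact hi (h5 ▸ hvj)
end

section
/- Let k, B ∈ ℕ and let a_1,…,a_{3k} be positive integers with Σ_{i=1}^{3k} a_i = k·B and B/4 < a_i < B/2 for every i. Let I be the unweighted delivery instance with k agents whose topology is built as follows: the hub h is adjacent to 3k vertices c_1,…,c_{3k}, and each c_i is additionally adjacent to a_i leaves. Then MMS(I) ≤ B + 3 if and only if there exists a partition of {1,…,3k} into k sets S_1,…,S_k, each of size exactly 3, such that Σ_{i∈S_j} a_i = B for every j ∈ [k]. -/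
namespace DeliveryInstance

open Classical in
/-- Agent `j` serves the center `i` or one of its leaves. -/
noncomputable def touched (I : DeliveryInstance) {m : ℕ} {a : Fin m → ℕ}
    (e : {v : I.V // v ≠ I.hub} ≃ (Fin m ⊕ Σ i : Fin m, Fin (a i)))
    (π : I.V → Fin I.n) (j : Fin I.n) : Finset (Fin m) :=
  Finset.univ.filter fun i => π (e.symm (Sum.inl i)).1 = j ∨
    ∃ l, π (e.symm (Sum.inr ⟨i, l⟩)).1 = j

/-- The leaves served by agent `j`. -/
noncomputable def served (I : DeliveryInstance) {m : ℕ} {a : Fin m → ℕ}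
    (e : {v : I.V // v ≠ I.hub} ≃ (Fin m ⊕ Σ i : Fin m, Fin (a i)))
    (π : I.V → Fin I.n) (j : Fin I.n) : Finset (Σ i : Fin m, Fin (a i)) :=
  Finset.univ.filter fun p => π (e.symm (Sum.inr p)).1 = j

theorem iter_hub (I : DeliveryInstance) (n : ℕ) : I.par^[n] I.hub = I.hub :=
  Function.iterate_fixed I.par_hub n

theorem cost_eq (I : DeliveryInstance) (hU : I.Unweighted) {m : ℕ} {a : Fin m → ℕ}
    (e : {v : I.V // v ≠ I.hub} ≃ (Fin m ⊕ Σ i : Fin m, Fin (a i)))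
    (hparC : ∀ i : Fin m, I.par (e.symm (Sum.inl i)).1 = I.hub)
    (hparL : ∀ (i : Fin m) (j : Fin (a i)),
      I.par (e.symm (Sum.inr ⟨i, j⟩)).1 = (e.symm (Sum.inl i)).1)
    (π : I.V → Fin I.n) (j : Fin I.n) :
    I.cost (I.bundle π j) = (((I.touched e π j).card + (I.served e π j).card : ℕ) : ℝ) := by
  classical
  have ancC : ∀ (u : I.V) (i : Fin m), u ≠ I.hub →
      (I.Anc u (e.symm (Sum.inl i)).1 ↔ u = (e.symm (Sum.inl i)).1) := by
    intro u i hu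
    constructor
    · rintro ⟨n, hn⟩
      cases n with
      | zero => exact hn.symm
      | succ n =>
        rw [Function.iterate_succ_apply, hparC, iter_hub] at hn
        exact absurd hn.symm hu
    · rintro rfl
      exact ⟨0, rfl⟩
  have ancL : ∀ (u : I.V) (i : Fin m) (l : Fin (a i)), u ≠ I.hub →
      (I.Anc u (e.symm (Sum.inr ⟨i, l⟩)).1 ↔
        u = (e.symm (Sum.inr ⟨i, l⟩)).1 ∨ u = (e.symm (Sum.inl i)).1) := by
    intro u i l hu
    constructor
    · rintro ⟨n, hn⟩
      cases n with
      | zero => exact Or.inl hn.symm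
      | succ n =>
        rw [Function.iterate_succ_apply, hparL] at hn
        exact Or.inr ((ancC u i hu).1 ⟨n, hn⟩)
    · rintro (rfl | rfl)
      · exact ⟨0, rfl⟩
      · exact ⟨1, hparL i l⟩
  have key : ∀ u : I.V, u ≠ I.hub → ((∃ v ∈ I.bundle π j, I.Anc u v) ↔
      ((∃ i, π (e.symm (Sum.inl i)).1 = j ∧ u = (e.symm (Sum.inl i)).1) ∨
       ∃ i l, π (e.symm (Sum.inr ⟨i, l⟩)).1 = j ∧
        (u = (e.symm (Sum.inr ⟨i, l⟩)).1 ∨ u = (e.symm (Sum.inl i)).1))) := by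
    intro u hu
    constructor
    · rintro ⟨v, ⟨hv, hj⟩, han⟩
      obtain ⟨x, hx⟩ := e.symm.surjective ⟨v, hv⟩
      have hx' : v = (e.symm x).1 := by rw [hx]
      subst hx'
      rcases x with i | ⟨i, l⟩
      · exact Or.inl ⟨i, hj, (ancC u i hu).1 han⟩
      · exact Or.inr ⟨i, l, hj, (ancL u i l hu).1 han⟩
    · rintro (⟨i, hj, h⟩ | ⟨i, l, hj, h⟩)
      · exact ⟨_, ⟨(e.symm _).2, hj⟩, (ancC u i hu).2 h⟩
      · exact ⟨_, ⟨(e.symm _).2, hj⟩, (ancL u i l hu).2 h⟩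
  have inj : ∀ x y, ((e.symm x).1 = (e.symm y).1 ↔ x = y) := by
    intro x y
    rw [← Subtype.ext_iff, e.symm.injective.eq_iff]
  unfold cost
  set f : I.V → ℝ := Set.indicator {u : I.V | u ≠ I.hub ∧ ∃ v ∈ I.bundle π j, I.Anc u v} I.w
    with hf
  have h1 : ∑ u : I.V, f u = ∑ u : {v : I.V // v ≠ I.hub}, f u.1 := by
    rw [← Finset.sum_erase_add _ _ (Finset.mem_univ I.hub)]
    have : f I.hub = 0 := by simp [hf]
    rw [this, add_zero]
    exact Finset.sum_subtype _ (by simp) f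
  have fC : ∀ i, f (e.symm (Sum.inl i)).1 = if i ∈ I.touched e π j then 1 else 0 := by
    intro i
    have hne := (e.symm (Sum.inl i)).2
    simp only [hf, Set.indicator_apply, Set.mem_ofPred_eq, key _ hne, hU _ hne, inj, touched,
      Finset.mem_filter, Finset.mem_univ, true_and]
    congr 1
    apply propext
    constructor
    · rintro ⟨-, ⟨i', h, h'⟩ | ⟨i', l, h, h' | h'⟩⟩
      · cases h'; exact Or.inl h
      · cases h'
      · cases h'; exact Or.inr ⟨l, h⟩
    · rintro (h | ⟨l, h⟩)
      · exact ⟨hne, Or.inl ⟨i, h, rfl⟩⟩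
      · exact ⟨hne, Or.inr ⟨i, l, h, Or.inr rfl⟩⟩
  have fL : ∀ p, f (e.symm (Sum.inr p)).1 = if p ∈ I.served e π j then 1 else 0 := by
    intro p
    have hne := (e.symm (Sum.inr p)).2
    simp only [hf, Set.indicator_apply, Set.mem_ofPred_eq, key _ hne, hU _ hne, inj, served,
      Finset.mem_filter, Finset.mem_univ, true_and]
    congr 1
    apply propext
    constructor
    · rintro ⟨-, ⟨i', h, h'⟩ | ⟨i', l, h, h' | h'⟩⟩
      · cases h'
      · cases h'; exact h
      · cases h'
    · intro h
      exact ⟨hne, Or.inr ⟨p.1, p.2, h, Or.inl rfl⟩⟩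
  rw [h1, ← Equiv.sum_comp e.symm, Fintype.sum_sum_type]
  simp only [fC, fL]
  simp

theorem served_card (I : DeliveryInstance) {m : ℕ} {a : Fin m → ℕ}
    (e : {v : I.V // v ≠ I.hub} ≃ (Fin m ⊕ Σ i : Fin m, Fin (a i)))
    (π : I.V → Fin I.n) (j : Fin I.n) (T : Finset (Fin m))
    (h : ∀ p, π (e.symm (Sum.inr p)).1 = j ↔ p.1 ∈ T) :
    (I.served e π j).card = ∑ i ∈ T, a i := by
  have : I.served e π j = T.sigma fun _ => Finset.univ := by
    ext p
    simp [served, h p]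
  rw [this, Finset.card_sigma]
  simp

end DeliveryInstance

/-- Let `a₁, …, a_{3k}` be positive integers summing to `k·B`
with `B/4 < aᵢ < B/2`, and let `I` be the unweighted `k`-agent instance whose
topology has the hub adjacent to centers `c₁, …, c_{3k}`, with `aᵢ` leaves
attached to `cᵢ`.  Then `MMS(I) ≤ B + 3` iff `[3k]` can be partitioned into `k`
triples each summing to `B`. -/
theorem stmt16 (k B : ℕ) (a : Fin (3 * k) → ℕ)
    (hpos : ∀ i, 0 < a i) (hsum : ∑ i, a i = k * B)
    (hlow : ∀ i, B < 4 * a i) (hhigh : ∀ i, 2 * a i < B)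
    (I : DeliveryInstance) (hU : I.Unweighted) (hk : I.n = k)
    (e : {v : I.V // v ≠ I.hub} ≃ (Fin (3 * k) ⊕ Σ i : Fin (3 * k), Fin (a i)))
    (hparC : ∀ i : Fin (3 * k), I.par (e.symm (Sum.inl i)).1 = I.hub)
    (hparL : ∀ (i : Fin (3 * k)) (j : Fin (a i)),
      I.par (e.symm (Sum.inr ⟨i, j⟩)).1 = (e.symm (Sum.inl i)).1) :
    I.MMSshare ≤ (B : ℝ) + 3 ↔
      ∃ S : Fin k → Finset (Fin (3 * k)),
        (∀ i : Fin (3 * k), ∃! j : Fin k, i ∈ S j) ∧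
        (∀ j, (S j).card = 3) ∧
        (∀ j, ∑ i ∈ S j, a i = B) := by
  classical
  subst hk
  have hm : I.MMSshare ≤ (B : ℝ) + 3 ↔ ∃ π : I.V → Fin I.n, ∀ j,
      (I.touched e π j).card + (I.served e π j).card ≤ B + 3 := by
    unfold DeliveryInstance.MMSshare
    refine (Finset.inf'_le_iff _).trans ?_
    simp only [Finset.mem_univ, true_and]
    refine exists_congr fun π => ?_
    unfold DeliveryInstance.maxCost
    refine (Finset.sup'_le_iff _ _).trans ?_
    simp only [Finset.mem_univ, forall_true_left]
    refine forall_congr' fun j => ?_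
    rw [I.cost_eq hU e hparC hparL]
    exact_mod_cast Iff.rfl
  rw [hm]
  constructor
  · rintro ⟨π, hπ⟩
    have hmem : ∀ p, p.1 ∈ I.touched e π (π (e.symm (Sum.inr p)).1) := by
      intro p
      simp only [DeliveryInstance.touched, Finset.mem_filter, Finset.mem_univ, true_and]
      exact Or.inr ⟨p.2, rfl⟩
    have hmemC : ∀ i, i ∈ I.touched e π (π (e.symm (Sum.inl i)).1) := by
      intro i
      simp [DeliveryInstance.touched]
    have hserved : ∑ j, (I.served e π j).card = I.n * B := by
      have := Finset.card_eq_sum_card_fiberwise (f := fun p => π (e.symm (Sum.inr p)).1)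
        (s := (Finset.univ : Finset (Σ i : Fin (3 * I.n), Fin (a i)))) (t := Finset.univ)
        (by simp)
      rw [Finset.card_univ, Fintype.card_sigma] at this
      simp only [Fintype.card_fin, hsum] at this
      exact this.symm
    have htouch : ∑ j, (I.touched e π j).card =
        ∑ i, (Finset.univ.filter fun j => i ∈ I.touched e π j).card := by
      simp only [Finset.card_filter]
      rw [Finset.sum_comm]
      simp
    have hone : ∀ i ∈ (Finset.univ : Finset (Fin (3 * I.n))),
        1 ≤ (Finset.univ.filter fun j => i ∈ I.touched e π j).card := by
      intro i _
      exact Finset.card_pos.2 ⟨_, Finset.mem_filter.2 ⟨Finset.mem_univ _, hmemC i⟩⟩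
    have hge := Finset.sum_le_sum hone
    have hle := Finset.sum_le_sum fun j (_ : j ∈ Finset.univ) => hπ j
    have heq1 := Finset.sum_eq_sum_iff_of_le hone
    have heq2 := Finset.sum_eq_sum_iff_of_le fun j (_ : j ∈ Finset.univ) => hπ j
    rw [Finset.sum_add_distrib, hserved, htouch] at hle heq2
    simp only [Finset.sum_const, Finset.card_univ, Fintype.card_fin, smul_eq_mul, mul_one] at *
    have hexp : I.n * (B + 3) = 3 * I.n + I.n * B := by ring
    have hc1 := heq1.1 (by omega)
    have hc2 := heq2.1 (by omega)
    have huniq : ∀ i j j', i ∈ I.touched e π j → i ∈ I.touched e π j' → j = j' := by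
      intro i j j' h h'
      exact Finset.card_le_one.1 (hc1 i (Finset.mem_univ i)).symm.le j (by simpa using h) j'
        (by simpa using h')
    have hsv : ∀ j, (I.served e π j).card = ∑ i ∈ I.touched e π j, a i := by
      intro j
      apply I.served_card
      intro p
      constructor
      · rintro rfl
        exact hmem p
      · intro h
        exact huniq _ _ _ (hmem p) h
    have hcard : ∀ j, (I.touched e π j).card = 3 := by
      intro j
      have h := hc2 j (Finset.mem_univ j)
      rw [hsv j] at h
      have hlo : (I.touched e π j).card * B ≤ ∑ i ∈ I.touched e π j, 4 * a i := by
        rw [← smul_eq_mul]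
        exact Finset.card_nsmul_le_sum _ _ _ fun i _ => (hlow i).le
      have hhi : ∑ i ∈ I.touched e π j, 2 * a i ≤ (I.touched e π j).card * B := by
        exact Finset.sum_le_card_nsmul _ _ _ fun i _ => (hhigh i).le
      rw [← Finset.mul_sum] at hlo hhi
      generalize (∑ i ∈ I.touched e π j, a i) = s at *
      generalize (I.touched e π j).card = c at *
      rcases lt_trichotomy c 3 with h3 | h3 | h3
      · have : c * B ≤ 2 * B := Nat.mul_le_mul_right _ (by omega)
        omega
      · exact h3
      · have : 4 * B ≤ c * B := Nat.mul_le_mul_right _ (by omega)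
        omega
    refine ⟨I.touched e π, fun i => ⟨_, hmemC i, fun j hj => huniq i _ _ hj (hmemC i)⟩, hcard, ?_⟩
    intro j
    have h := hc2 j (Finset.mem_univ j)
    rw [hsv j, hcard j] at h
    omega
  · rintro ⟨S, hS, hc, hs⟩
    choose f hf hfu using hS
    let π : I.V → Fin I.n := fun v => if h : v = I.hub then ⟨0, I.n_pos⟩ else
      Sum.elim f (fun p => f p.1) (e ⟨v, h⟩)
    have hπ : ∀ x, π (e.symm x).1 = Sum.elim f (fun p => f p.1) x := by
      intro x
      simp [π, (e.symm x).2]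
    have hfi : ∀ i j, f i = j ↔ i ∈ S j := by
      intro i j
      constructor
      · rintro rfl
        exact hf i
      · intro h
        exact (hfu i j h).symm
    refine ⟨π, fun j => ?_⟩
    have h1 : I.touched e π j = S j := by
      ext i
      simp only [DeliveryInstance.touched, hπ, Finset.mem_filter, Finset.mem_univ, true_and,
        Sum.elim_inl, Sum.elim_inr, hfi]
      tauto
    have h2 : (I.served e π j).card = ∑ i ∈ S j, a i := by
      apply I.served_card
      intro p
      rw [hπ, Sum.elim_inr, hfi]
    rw [h1, h2, hc, hs]
    omega
end
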